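/- arXiv:1606.08546 — 2 statements merged into one kernel-verified Lean document; each statement's English description precedes it below -/
import Mathlib

section
/- (Density Lemma) For each δ > 0, the set 𝒜_δ of δ-approximating functions is dense in the admissible set 𝒜 with respect to the L∞(Ω_T;ℝ²) norm; that is, for every w ∈ 𝒜 and every η > 0 there exists w_η ∈ 𝒜_δ with ‖w_η − w‖_{L∞(Ω_T;ℝ²)} < η. -/
open MeasureTheory Set
open scoped NNReal

noncomputable section

/-- The open space-time domain `Ω_T = (0,1) × (0,T)`. -/
def OmegaT (T : ℝ) : Set (ℝ × ℝ) := Ioo (0:ℝ) 1 ×ˢ Ioo (0:ℝ) T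

/-- The closed space-time domain `cl Ω_T = [0,1] × [0,T]`. -/
def ClOmegaT (T : ℝ) : Set (ℝ × ℝ) := Icc (0:ℝ) 1 ×ˢ Icc (0:ℝ) T

/-- Parabolic α-Hölder continuity on `cl Ω_T`. -/
def ParabolicHolder (α T : ℝ) (g : ℝ → ℝ → ℝ) : Prop :=
  ∃ C : ℝ, ∀ x ∈ Icc (0:ℝ) 1, ∀ y ∈ Icc (0:ℝ) 1, ∀ t ∈ Icc (0:ℝ) T, ∀ s ∈ Icc (0:ℝ) T,
    |g x t - g y s| ≤ C * (|x - y| ^ α + |t - s| ^ (α / 2))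

/-- Hypotheses on the forward-backward diffusion flux `σ`, with derivative function `σ'`
(one-sided derivative on `(-∞,s1]` and `[s2,∞)`). -/
structure FluxHyp (α s1 s2 lam Lam : ℝ) (sigma sigma' : ℝ → ℝ) : Prop where
  alpha_pos : 0 < α
  alpha_lt_one : α < 1
  s1_pos : 0 < s1
  s1_lt_s2 : s1 < s2
  lam_pos : 0 < lam
  lam_le_Lam : lam ≤ Lam
  deriv_left : ∀ s ∈ Iic s1, HasDerivWithinAt sigma (sigma' s) (Iic s1) s
  deriv_right : ∀ s ∈ Ici s2, HasDerivWithinAt sigma (sigma' s) (Ici s2) s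
  holder_left : ∃ C : ℝ, ∀ s ∈ Iic s1, ∀ t ∈ Iic s1, |sigma' s - sigma' t| ≤ C * |s - t| ^ α
  holder_right : ∃ C : ℝ, ∀ s ∈ Ici s2, ∀ t ∈ Ici s2, |sigma' s - sigma' t| ≤ C * |s - t| ^ α
  deriv_pos : ∀ s : ℝ, s < s1 ∨ s2 < s → 0 < sigma' s
  deriv_lb : ∀ s : ℝ, s < s1 / 2 ∨ 2 * s2 < s → lam ≤ sigma' s
  deriv_ub : ∀ s : ℝ, s < s1 / 2 ∨ 2 * s2 < s → sigma' s ≤ Lam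
  sigma_zero : sigma 0 = 0
  sigma_s2_lt_s1 : sigma s2 < sigma s1
  sigma_s2_nonneg : 0 ≤ sigma s2

/-- Hypotheses on the convection coefficient `b` (with spatial derivative `bx`),
reaction coefficient `c`, source `f` and the function `d` with `c = b_x + d(t)`. -/
structure CoeffHyp (α T : ℝ) (b bx c f : ℝ → ℝ → ℝ) (d : ℝ → ℝ) : Prop where
  b_cont : ContinuousOn (fun p : ℝ × ℝ => b p.1 p.2) (ClOmegaT T)
  b_holder : ParabolicHolder α T b
  b_deriv : ∀ p ∈ ClOmegaT T, HasDerivWithinAt (fun y => b y p.2) (bx p.1 p.2) (Icc (0:ℝ) 1) p.1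
  bx_cont : ContinuousOn (fun p : ℝ × ℝ => bx p.1 p.2) (ClOmegaT T)
  c_cont : ContinuousOn (fun p : ℝ × ℝ => c p.1 p.2) (ClOmegaT T)
  c_holder : ParabolicHolder α T c
  f_cont : ContinuousOn (fun p : ℝ × ℝ => f p.1 p.2) (ClOmegaT T)
  f_holder : ParabolicHolder α T f
  d_cont : ContinuousOn d (Icc (0:ℝ) T)
  c_eq : ∀ p ∈ ClOmegaT T, c p.1 p.2 = bx p.1 p.2 + d p.2

/-- Hypotheses on the initial datum `u0 ∈ C^{2+α}([0,1])` with `u0'(0) = u0'(1) = 0`. -/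
structure InitHyp (α : ℝ) (u0 u0' u0'' : ℝ → ℝ) : Prop where
  deriv1 : ∀ x ∈ Icc (0:ℝ) 1, HasDerivWithinAt u0 (u0' x) (Icc (0:ℝ) 1) x
  deriv2 : ∀ x ∈ Icc (0:ℝ) 1, HasDerivWithinAt u0' (u0'' x) (Icc (0:ℝ) 1) x
  holder : ∃ C : ℝ, ∀ x ∈ Icc (0:ℝ) 1, ∀ y ∈ Icc (0:ℝ) 1, |u0'' x - u0'' y| ≤ C * |x - y| ^ α
  compat0 : u0' 0 = 0
  compat1 : u0' 1 = 0

/-- `u` (with a.e. spatial derivative `ux`) is a Lipschitz (weak) solution of the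
initial–Neumann problem for `u_t = (σ(u_x))_x + b u_x + c u + f` on `Ω_T`. -/
def IsLipschitzSolution (T : ℝ) (sigma : ℝ → ℝ) (b c f : ℝ → ℝ → ℝ) (u0 : ℝ → ℝ)
    (u ux : ℝ → ℝ → ℝ) : Prop :=
  (∃ K : ℝ≥0, LipschitzOnWith K (fun p : ℝ × ℝ => u p.1 p.2) (ClOmegaT T)) ∧
  (∀ᵐ p ∂(volume.restrict (OmegaT T)), HasDerivAt (fun y => u y p.2) (ux p.1 p.2) p.1) ∧
  (∀ ζ : ℝ → ℝ → ℝ, ContDiff ℝ (⊤ : ℕ∞) (fun p : ℝ × ℝ => ζ p.1 p.2) →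
    ∀ s ∈ Icc (0:ℝ) T,
      (∫ t in Ioo (0:ℝ) s, ∫ x in Ioo (0:ℝ) 1,
        (u x t * deriv (fun τ => ζ x τ) t - sigma (ux x t) * deriv (fun y => ζ y t) x
          + (b x t * ux x t + c x t * u x t + f x t) * ζ x t))
      = ∫ x in Ioo (0:ℝ) 1, (u x s * ζ x s - u0 x * ζ x 0))

/-- The forward-phase constraint: `u_x ∈ (-∞,s1) ∪ (s2,∞)` a.e. in `Ω_T`. -/
def ForwardRange (T s1 s2 : ℝ) (ux : ℝ → ℝ → ℝ) : Prop :=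
  ∀ᵐ p ∂(volume.restrict (OmegaT T)), ux p.1 p.2 < s1 ∨ s2 < ux p.1 p.2

/-- `F(x,t) = ∫_0^x f(y,t) dy`. -/
def Fint (f : ℝ → ℝ → ℝ) (x t : ℝ) : ℝ := ∫ y in (0:ℝ)..x, f y t

/-- The potential operator `P_u(x,t) = ∫_0^x (c(y,t) - b_y(y,t)) u(y,t) dy`. -/
def Pot (c bx : ℝ → ℝ → ℝ) (u : ℝ → ℝ → ℝ) (x t : ℝ) : ℝ :=
  ∫ y in (0:ℝ)..x, (c y t - bx y t) * u y t

/-- The quantity `v_t - b u - P_u - F` at `(x,t)` (the second coordinate of the gradient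
constraint in the nonlocal differential inclusion). -/
def GVal (b c bx f : ℝ → ℝ → ℝ) (u vt : ℝ → ℝ → ℝ) (x t : ℝ) : ℝ :=
  vt x t - b x t * u x t - Pot c bx u x t - Fint f x t

/-- `Σ0`, the graph of `σ`. -/
def Sigma0 (sigma : ℝ → ℝ) : Set (ℝ × ℝ) := {q | q.2 = sigma q.1}

/-- `U0 = {(s,r) : σ(s2) < r < σ(s1), s_r^- < s < s_r^+}`. -/
def U0set (sigma : ℝ → ℝ) (s1 s2 : ℝ) (sm sp : ℝ → ℝ) : Set (ℝ × ℝ) :=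
  {q | sigma s2 < q.2 ∧ q.2 < sigma s1 ∧ sm q.2 < q.1 ∧ q.1 < sp q.2}

/-- `K0 = {(s,σ(s)) : s ∈ [s1*,s1] ∪ [s2,s2*]}`. -/
def K0set (sigma : ℝ → ℝ) (s1star s1 s2 s2star : ℝ) : Set (ℝ × ℝ) :=
  {q | (q.1 ∈ Icc s1star s1 ∨ q.1 ∈ Icc s2 s2star) ∧ q.2 = sigma q.1}

/-- `w = (u,v)` (with a.e. partial derivatives `ux`, `vx`, `vt`) is a subsolution of the
nonlocal differential inclusion: `v_x = u` and `(u_x, v_t - bu - P_u - F) ∈ Σ0 ∪ U0` a.e. -/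
structure IsSubsolution (T : ℝ) (sigma : ℝ → ℝ) (s1 s2 : ℝ) (sm sp : ℝ → ℝ)
    (b bx c f : ℝ → ℝ → ℝ) (u v ux vx vt : ℝ → ℝ → ℝ) : Prop where
  lip_u : ∃ K : ℝ≥0, LipschitzOnWith K (fun p : ℝ × ℝ => u p.1 p.2) (ClOmegaT T)
  lip_v : ∃ K : ℝ≥0, LipschitzOnWith K (fun p : ℝ × ℝ => v p.1 p.2) (ClOmegaT T)
  du : ∀ᵐ p ∂(volume.restrict (OmegaT T)), HasDerivAt (fun y => u y p.2) (ux p.1 p.2) p.1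
  dvx : ∀ᵐ p ∂(volume.restrict (OmegaT T)), HasDerivAt (fun y => v y p.2) (vx p.1 p.2) p.1
  dvt : ∀ᵐ p ∂(volume.restrict (OmegaT T)), HasDerivAt (fun τ => v p.1 τ) (vt p.1 p.2) p.2
  vx_eq_u : ∀ᵐ p ∂(volume.restrict (OmegaT T)), vx p.1 p.2 = u p.1 p.2
  incl : ∀ᵐ p ∂(volume.restrict (OmegaT T)),
    (ux p.1 p.2, GVal b c bx f u vt p.1 p.2) ∈ Sigma0 sigma ∪ U0set sigma s1 s2 sm sp

/-- The transition set `O^w` of a subsolution `w = (u,v)`. -/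
def TransSet (T : ℝ) (sigma : ℝ → ℝ) (s1star s1 s2 s2star : ℝ) (sm sp : ℝ → ℝ)
    (b bx c f : ℝ → ℝ → ℝ) (u vt ux : ℝ → ℝ → ℝ) : Set (ℝ × ℝ) :=
  {p ∈ OmegaT T | (ux p.1 p.2, GVal b c bx f u vt p.1 p.2)
      ∈ K0set sigma s1star s1 s2 s2star ∪ U0set sigma s1 s2 sm sp}

/-- `Z_w = (u_x - S_w^-)/(S_w^+ - S_w^-)` with `S_w^± = s^±_{v_t - bu - P_u - F}`. -/
def Zfun (sm sp : ℝ → ℝ) (b bx c f : ℝ → ℝ → ℝ) (u vt ux : ℝ → ℝ → ℝ) (p : ℝ × ℝ) : ℝ :=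
  (ux p.1 p.2 - sm (GVal b c bx f u vt p.1 p.2))
    / (sp (GVal b c bx f u vt p.1 p.2) - sm (GVal b c bx f u vt p.1 p.2))

/-- The transition gauge `Γ_w^E = (1/|E|) ∫_E Z_w`. -/
def Gauge (sm sp : ℝ → ℝ) (b bx c f : ℝ → ℝ → ℝ) (u vt ux : ℝ → ℝ → ℝ)
    (E : Set (ℝ × ℝ)) : ℝ :=
  ((volume E).toReal)⁻¹ * ∫ p in E, Zfun sm sp b bx c f u vt ux p

/-- Membership in `C^{2,1}(cl Ω_T)`, with the derivative data `ux`, `uxx`, `ut`. -/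
structure C21 (T : ℝ) (u ux uxx ut : ℝ → ℝ → ℝ) : Prop where
  dx : ∀ p ∈ ClOmegaT T, HasDerivWithinAt (fun y => u y p.2) (ux p.1 p.2) (Icc (0:ℝ) 1) p.1
  dxx : ∀ p ∈ ClOmegaT T, HasDerivWithinAt (fun y => ux y p.2) (uxx p.1 p.2) (Icc (0:ℝ) 1) p.1
  dt : ∀ p ∈ ClOmegaT T, HasDerivWithinAt (fun τ => u p.1 τ) (ut p.1 p.2) (Icc (0:ℝ) T) p.2
  cont : ContinuousOn (fun p : ℝ × ℝ => u p.1 p.2) (ClOmegaT T)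
  cont_x : ContinuousOn (fun p : ℝ × ℝ => ux p.1 p.2) (ClOmegaT T)
  cont_xx : ContinuousOn (fun p : ℝ × ℝ => uxx p.1 p.2) (ClOmegaT T)
  cont_t : ContinuousOn (fun p : ℝ × ℝ => ut p.1 p.2) (ClOmegaT T)

/-- Membership in `C^{3,1}(cl Ω_T)`, with the derivative data `vx`, `vxx`, `vxxx`, `vt`. -/
structure C31 (T : ℝ) (v vx vxx vxxx vt : ℝ → ℝ → ℝ) : Prop where
  dx : ∀ p ∈ ClOmegaT T, HasDerivWithinAt (fun y => v y p.2) (vx p.1 p.2) (Icc (0:ℝ) 1) p.1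
  dxx : ∀ p ∈ ClOmegaT T, HasDerivWithinAt (fun y => vx y p.2) (vxx p.1 p.2) (Icc (0:ℝ) 1) p.1
  dxxx : ∀ p ∈ ClOmegaT T, HasDerivWithinAt (fun y => vxx y p.2) (vxxx p.1 p.2) (Icc (0:ℝ) 1) p.1
  dt : ∀ p ∈ ClOmegaT T, HasDerivWithinAt (fun τ => v p.1 τ) (vt p.1 p.2) (Icc (0:ℝ) T) p.2
  cont : ContinuousOn (fun p : ℝ × ℝ => v p.1 p.2) (ClOmegaT T)
  cont_x : ContinuousOn (fun p : ℝ × ℝ => vx p.1 p.2) (ClOmegaT T)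
  cont_xx : ContinuousOn (fun p : ℝ × ℝ => vxx p.1 p.2) (ClOmegaT T)
  cont_xxx : ContinuousOn (fun p : ℝ × ℝ => vxxx p.1 p.2) (ClOmegaT T)
  cont_t : ContinuousOn (fun p : ℝ × ℝ => vt p.1 p.2) (ClOmegaT T)

/-- `Ω¹_T = {(x,t) ∈ Ω_T : u*_x(x,t) < s^-_{r1}}`. -/
def Omega1 (T smr1 : ℝ) (usx : ℝ → ℝ → ℝ) : Set (ℝ × ℝ) :=
  {p ∈ OmegaT T | usx p.1 p.2 < smr1}

/-- `Ω²_T = {(x,t) ∈ Ω_T : s^-_{r1} < u*_x(x,t) < s^+_{r2}}`. -/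
def Omega2 (T smr1 spr2 : ℝ) (usx : ℝ → ℝ → ℝ) : Set (ℝ × ℝ) :=
  {p ∈ OmegaT T | smr1 < usx p.1 p.2 ∧ usx p.1 p.2 < spr2}

/-- `Ω³_T = {(x,t) ∈ Ω_T : u*_x(x,t) > s^+_{r2}}`. -/
def Omega3 (T spr2 : ℝ) (usx : ℝ → ℝ → ℝ) : Set (ℝ × ℝ) :=
  {p ∈ OmegaT T | spr2 < usx p.1 p.2}

/-- `Ω^{0,-}_T = {(x,t) ∈ Ω_T : u*_x(x,t) = s^-_{r1}}`. -/
def Omega0m (T smr1 : ℝ) (usx : ℝ → ℝ → ℝ) : Set (ℝ × ℝ) :=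
  {p ∈ OmegaT T | usx p.1 p.2 = smr1}

/-- `Ω^{0,+}_T = {(x,t) ∈ Ω_T : u*_x(x,t) = s^+_{r2}}`. -/
def Omega0p (T spr2 : ℝ) (usx : ℝ → ℝ → ℝ) : Set (ℝ × ℝ) :=
  {p ∈ OmegaT T | usx p.1 p.2 = spr2}

/-- The `L∞(Ω_T)` norm (essential supremum over `Ω_T` of the absolute value). -/
def EssSupAbs (T : ℝ) (g : ℝ → ℝ → ℝ) : ℝ :=
  essSup (fun p : ℝ × ℝ => |g p.1 p.2|) (volume.restrict (OmegaT T))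

/-- Hypotheses on the modified flux `σ̃ ∈ C^{1+α}(ℝ)` (with derivative `σ̃'`). -/
structure TildeHyp (α r1 r2 lamt Lamt : ℝ) (sigma sm sp sigmat sigmat' : ℝ → ℝ) : Prop where
  deriv : ∀ s : ℝ, HasDerivAt sigmat (sigmat' s) s
  holder : ∃ C : ℝ, ∀ s t : ℝ, |sigmat' s - sigmat' t| ≤ C * |s - t| ^ α
  eq_left : ∀ s : ℝ, s ≤ sm r1 → sigmat s = sigma s
  eq_right : ∀ s : ℝ, sp r2 ≤ s → sigmat s = sigma s
  lt_mid : ∀ s : ℝ, sm r1 < s → s ≤ sm r2 → sigmat s < sigma s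
  gt_mid : ∀ s : ℝ, sp r1 ≤ s → s < sp r2 → sigma s < sigmat s
  lamt_pos : 0 < lamt
  lamt_le_Lamt : lamt ≤ Lamt
  deriv_lb : ∀ s : ℝ, lamt ≤ sigmat' s
  deriv_ub : ∀ s : ℝ, sigmat' s ≤ Lamt

/-- `u*` is the classical solution in `C^{2+α,1+α/2}(cl Ω_T)` of the modified problem. -/
structure StarSol (α T : ℝ) (sigmat sigmat' : ℝ → ℝ) (b bx c f : ℝ → ℝ → ℝ) (u0 : ℝ → ℝ)
    (us usx usxx ust : ℝ → ℝ → ℝ) : Prop where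
  reg : C21 T us usx usxx ust
  holder_xx : ParabolicHolder α T usxx
  holder_t : ParabolicHolder α T ust
  pde : ∀ p ∈ OmegaT T, ust p.1 p.2 =
    sigmat' (usx p.1 p.2) * usxx p.1 p.2 + b p.1 p.2 * usx p.1 p.2
      + c p.1 p.2 * us p.1 p.2 + f p.1 p.2
  ic : ∀ x ∈ Icc (0:ℝ) 1, us x 0 = u0 x
  bc : ∀ t ∈ Icc (0:ℝ) T, usx 0 t = 0 ∧ usx 1 t = 0

/-- The auxiliary function
`v*(x,t) = ∫_0^t (σ̃(u*_x) + b u* + P_{u*} + F)(x,τ) dτ + ∫_0^x u0(y) dy`. -/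
def VStar (sigmat : ℝ → ℝ) (b bx c f : ℝ → ℝ → ℝ) (u0 : ℝ → ℝ) (us usx : ℝ → ℝ → ℝ)
    (x t : ℝ) : ℝ :=
  (∫ τ in (0:ℝ)..t, (sigmat (usx x τ) + b x τ * us x τ + Pot c bx us x τ + Fint f x τ))
    + ∫ y in (0:ℝ)..x, u0 y

/-- The classical time derivative of `v*`: `v*_t = σ̃(u*_x) + b u* + P_{u*} + F`. -/
def VStarT (sigmat : ℝ → ℝ) (b bx c f : ℝ → ℝ → ℝ) (us usx : ℝ → ℝ → ℝ) (x t : ℝ) : ℝ :=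
  sigmat (usx x t) + b x t * us x t + Pot c bx us x t + Fint f x t

/-- A `2×2` matrix `(a b; c d)` regarded as a point of Euclidean `ℝ⁴`, so that the Euclidean
distance is the Hilbert–Schmidt distance. -/
def mk4 (a b c d : ℝ) : EuclideanSpace ℝ (Fin 4) :=
  (WithLp.equiv 2 (Fin 4 → ℝ)).symm ![a, b, c, d]

/-- `K' = {(s,σ(s)) : s ∈ [s^-_{r1}, s^-_{r2}] ∪ [s^+_{r1}, s^+_{r2}]}`. -/
def Kprime (sigma : ℝ → ℝ) (sm sp : ℝ → ℝ) (r1 r2 : ℝ) : Set (ℝ × ℝ) :=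
  {q | (q.1 ∈ Icc (sm r1) (sm r2) ∨ q.1 ∈ Icc (sp r1) (sp r2)) ∧ q.2 = sigma q.1}

/-- `U' = {(s,r) : r1 < r < r2, s_r^- < s < s_r^+}`. -/
def Uprime (sm sp : ℝ → ℝ) (r1 r2 : ℝ) : Set (ℝ × ℝ) :=
  {q | r1 < q.2 ∧ q.2 < r2 ∧ sm q.2 < q.1 ∧ q.1 < sp q.2}

/-- The compact matrix set `K((x,t);u)` (as a subset of Euclidean `ℝ⁴`). -/
def KmatSet (sigma sm sp : ℝ → ℝ) (r1 r2 mstar : ℝ) (b c bx f : ℝ → ℝ → ℝ)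
    (u : ℝ → ℝ → ℝ) (x t : ℝ) : Set (EuclideanSpace ℝ (Fin 4)) :=
  {A | ∃ s c' q : ℝ, A = mk4 s c' (u x t) q ∧ |c'| ≤ mstar ∧
    (s, q - b x t * u x t - Pot c bx u x t - Fint f x t) ∈ Kprime sigma sm sp r1 r2}

/-- The condition `∇w(x,t) ∈ U((x,t);u)` for `w = (u,v)` with gradient data
`ux, ut, vx, vt`. -/
def GradInU (r1 r2 mstar : ℝ) (sm sp : ℝ → ℝ) (b c bx f : ℝ → ℝ → ℝ)
    (u ux ut vx vt : ℝ → ℝ → ℝ) (p : ℝ × ℝ) : Prop :=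
  vx p.1 p.2 = u p.1 p.2 ∧ |ut p.1 p.2| < mstar ∧
    (ux p.1 p.2, GVal b c bx f u vt p.1 p.2) ∈ Uprime sm sp r1 r2

/-- A pair `w = (u,v)` together with all relevant partial-derivative data. -/
structure PairData where
  u : ℝ → ℝ → ℝ
  ux : ℝ → ℝ → ℝ
  uxx : ℝ → ℝ → ℝ
  ut : ℝ → ℝ → ℝ
  v : ℝ → ℝ → ℝ
  vx : ℝ → ℝ → ℝ
  vxx : ℝ → ℝ → ℝ
  vxxx : ℝ → ℝ → ℝ
  vt : ℝ → ℝ → ℝ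

/-- Membership in the admissible set `𝒜` of subsolutions. Here `us, usx, ust` are the data of
`u*`, `vs` is `v*`, `E = Ω²_T`, `mstar = m*` and `GammaStar = Γ_{w*}^E`. -/
def InAdmissible (T r1 r2 mstar ε GammaStar : ℝ) (sigma sm sp : ℝ → ℝ)
    (b bx c f : ℝ → ℝ → ℝ) (us ust vs : ℝ → ℝ → ℝ) (E : Set (ℝ × ℝ))
    (W : PairData) : Prop :=
  C21 T W.u W.ux W.uxx W.ut ∧
  C31 T W.v W.vx W.vxx W.vxxx W.vt ∧
  (∃ O : Set (ℝ × ℝ), IsOpen O ∧ closure O ⊆ E ∧ IsCompact (closure O) ∧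
    volume (frontier O) = 0 ∧
    (∀ p ∈ OmegaT T \ closure O, W.u p.1 p.2 = us p.1 p.2 ∧ W.v p.1 p.2 = vs p.1 p.2) ∧
    (∀ p ∈ OmegaT T \ closure O, Pot c bx W.u p.1 p.2 = Pot c bx us p.1 p.2)) ∧
  EssSupAbs T (fun x t => W.u x t - us x t) < ε / 2 ∧
  EssSupAbs T (fun x t => W.ut x t - ust x t) < ε / 2 ∧
  (∀ p ∈ E, GradInU r1 r2 mstar sm sp b c bx f W.u W.ux W.ut W.vx W.vt p) ∧
  |Gauge sm sp b bx c f W.u W.vt W.ux E - GammaStar| < ε / 2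

/-- Membership in the set `𝒜_δ` of `δ`-approximating subsolutions (the extra integral
condition beyond membership in `𝒜`). -/
def DeltaApproxCond (r1 r2 mstar δ : ℝ) (sigma sm sp : ℝ → ℝ)
    (b bx c f : ℝ → ℝ → ℝ) (E : Set (ℝ × ℝ)) (W : PairData) : Prop :=
  (∫ p in E, Metric.infDist
      (mk4 (W.ux p.1 p.2) (W.ut p.1 p.2) (W.vx p.1 p.2) (W.vt p.1 p.2))
      (KmatSet sigma sm sp r1 r2 mstar b c bx f W.u p.1 p.2))
    ≤ δ * (volume E).toReal

/-!
The energy `∫_E u_x²` is bounded on `𝒜`, because the gradient constraint confines `u_x` to the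
compact range between the two phases. If `w ∈ 𝒜` fails to be `δ`-approximating, then `u_x` stays, on
average over `E`, at least `δ` away from both phases, since the distance of `∇w` to `K` is at most
the distance of `u_x` to the nearer phase. So there is a smooth `ψ ≥ 0`, compactly supported in `E`,
below that gap pointwise and with `∫_E ψ > δ|E|`. Adding `(∂ₓφ_k, φ_k)` with
`φ_k = -k⁻² ψ sin (k x)` perturbs `u_x` by `ψ sin (k x) + o(1)` and everything else by `o(1)`: the
nonlocal term stays under control because `c - b_x = d(t)` turns `P_{∂ₓφ}` into the local term
`d φ`. For large `k` the perturbed pair is therefore admissible and uniformly close to `w`, while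
its energy exceeds that of `w` by about `½ ∫_E ψ² > ½ δ²|E|`. Such gains of a fixed size can be
repeated only finitely often.
-/

open Filter Function Topology
open scoped ContDiff Manifold

theorem subset_closure_inter_of_gain {X : Type*} [TopologicalSpace X] {A B : Set X} {J : X → ℝ}
    {κ : ℝ} (hκ : 0 < κ) (hJ : BddAbove (J '' A))
    (gain : ∀ x ∈ A, x ∉ B → x ∈ closure {y ∈ A | J x + κ ≤ J y}) :
    A ⊆ closure (A ∩ B) := by
  obtain ⟨M, hM⟩ := hJ
  have reach (n : ℕ) : ∀ x ∈ A, M - n * κ < J x → x ∈ closure (A ∩ B) := by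
    induction n with
    | zero =>
      intro x hx hlt
      have : J x ≤ M := hM (mem_image_of_mem J hx)
      simp only [Nat.cast_zero, zero_mul, sub_zero] at hlt
      exact absurd hlt this.not_gt
    | succ n ih =>
      intro x hx hlt
      by_cases hB : x ∈ B
      · exact subset_closure ⟨hx, hB⟩
      · refine closure_minimal ?_ isClosed_closure (gain x hx hB)
        rintro y ⟨hy, hxy⟩
        exact ih y hy (by push_cast at hlt; linarith)
  intro x hx
  obtain ⟨n, hn⟩ := exists_nat_gt ((M - J x) / κ)
  exact reach n x hx (by rw [div_lt_iff₀ hκ] at hn; linarith)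

section Inverse

variable {X Y : Type*} [TopologicalSpace X] [TopologicalSpace Y] [T2Space X]

theorem continuousOn_of_rightInvOn {f : Y → X} {g : X → Y} {K : Set Y} {s : Set X}
    (hK : IsCompact K) (hf : ContinuousOn f K) (hinj : InjOn f K) (hg : MapsTo g s K)
    (hfg : RightInvOn g f s) : ContinuousOn g s := by
  have : CompactSpace K := isCompact_iff_compactSpace.mp hK
  have hemb : IsClosedEmbedding (K.domRestrict f) :=
    (continuousOn_iff_continuous_domRestrict.mp hf).isClosedEmbedding hinj.injective
  have hcont : Continuous (hg.restrict g s K) := by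
    rw [hemb.continuous_iff]
    exact continuous_subtype_val.congr fun x => (hfg x.2).symm
  exact continuousOn_iff_continuous_domRestrict.mpr (continuous_subtype_val.comp hcont)

end Inverse

theorem exists_isOpen_null_frontier {X : Type*} [PseudoMetricSpace X] [ProperSpace X]
    [MeasurableSpace X] [OpensMeasurableSpace X] (μ : Measure X) [SFinite μ] {K U : Set X}
    (hK : IsCompact K) (hU : IsOpen U) (hKU : K ⊆ U) :
    ∃ O, IsOpen O ∧ K ⊆ O ∧ closure O ⊆ U ∧ IsCompact (closure O) ∧ μ (frontier O) = 0 := by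
  obtain ⟨δ, hδ, hδU⟩ := hK.exists_cthickening_subset_open hU hKU
  obtain ⟨r, ⟨hr, hrδ⟩, hnull⟩ := exists_null_frontier_thickening μ K hδ
  have hcl : closure (Metric.thickening r K) ⊆ Metric.cthickening δ K :=
    (Metric.closure_thickening_subset_cthickening r K).trans (Metric.cthickening_mono hrδ.le K)
  exact ⟨Metric.thickening r K, Metric.isOpen_thickening, Metric.self_subset_thickening hr K,
    hcl.trans hδU, hK.cthickening.of_isClosed_subset isClosed_closure hcl, hnull⟩

theorem eventually_forall_lt_of_tendstoUniformlyOn {ι X : Type*} [TopologicalSpace X]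
    {l : Filter ι} {F G : ι → X → ℝ} {f g : X → ℝ} {K : Set X} (hK : IsCompact K)
    (hf : ContinuousOn f K) (hg : ContinuousOn g K) (hfg : ∀ x ∈ K, f x < g x)
    (hF : TendstoUniformlyOn F f l K) (hG : TendstoUniformlyOn G g l K) :
    ∀ᶠ i in l, ∀ x ∈ K, F i x < G i x := by
  obtain ⟨c, hc, hcfg⟩ : ∃ c > 0, ∀ x ∈ K, c ≤ g x - f x := by
    rcases K.eq_empty_or_nonempty with rfl | hne
    · exact ⟨1, one_pos, by simp⟩
    · obtain ⟨x, hx, hmin⟩ := hK.exists_isMinOn hne (hg.sub hf)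
      exact ⟨g x - f x, sub_pos.mpr (hfg x hx), hmin⟩
  filter_upwards [Metric.tendstoUniformlyOn_iff.mp (hG.sub hF) c hc] with i hi x hx
  have hlt : g x - f x - (G i x - F i x) < c := (le_abs_self _).trans_lt (hi x hx)
  linarith [hcfg x hx]

theorem continuousOn_intervalIntegral_left {X : Type*} [TopologicalSpace X]
    {a b : ℝ} {s : Set X} {g : ℝ → X → ℝ}
    (hg : ContinuousOn (uncurry g) (Icc a b ×ˢ s)) :
    ContinuousOn (fun p : ℝ × X => ∫ y in a..p.1, g y p.2) (Icc a b ×ˢ s) := by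
  rintro ⟨x, t⟩ hp
  have hab : a ≤ b := hp.1.1.trans hp.1.2
  have hclamp : Continuous
      (uncurry fun (q : (Icc a b ×ˢ s : Set (ℝ × X))) y => g (projIcc a b hab y) q.1.2) := by
    refine hg.comp_continuous (f := fun z : (Icc a b ×ˢ s : Set (ℝ × X)) × ℝ =>
      ((projIcc a b hab z.2 : ℝ), z.1.1.2)) (by fun_prop)
      fun z => ⟨(projIcc a b hab z.2).2, z.1.2.2⟩
  have hint := intervalIntegral.continuous_parametric_intervalIntegral_of_continuous
    (μ := volume) (a₀ := a) hclamp (s := fun q => q.1.1) (by fun_prop)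
  refine (continuousOn_iff_continuous_domRestrict.mpr (hint.congr ?_)) _ hp
  rintro ⟨⟨x, t⟩, hx, ht⟩
  refine intervalIntegral.integral_congr fun y hy => ?_
  rw [uIcc_of_le hx.1] at hy
  simp only [projIcc_of_mem hab ⟨hy.1, hy.2.trans hx.2⟩]

section Oscillation

variable {V : Type*} [NormedAddCommGroup V] [NormedSpace ℝ V] [MeasurableSpace V] [BorelSpace V]
  {μ : Measure V} {S : Set V} {L : StrongDual ℝ V} {g : V → ℝ}

theorem integrableOn_cexp_mul (L : StrongDual ℝ V) (hg : IntegrableOn g S μ) (k : ℝ) :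
    IntegrableOn (fun p => Complex.exp ((k * L p : ℝ) * Complex.I) * g p) S μ :=
  hg.ofReal.bdd_mul (c := 1) (Continuous.aestronglyMeasurable (by fun_prop))
    (Eventually.of_forall fun p => (Complex.norm_exp_ofReal_mul_I _).le)

variable [FiniteDimensional ℝ V] [μ.IsAddHaarMeasure]

theorem tendsto_setIntegral_cexp_mul (hS : MeasurableSet S) (hL : L ≠ 0) (g : V → ℝ) :
    Tendsto (fun k : ℝ => ∫ p in S, Complex.exp ((k * L p : ℝ) * Complex.I) * g p ∂μ)
      atTop (𝓝 0) := by
  have hfreq : Tendsto (fun k : ℝ => (-(2 * Real.pi)⁻¹ * k) • L) atTop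
      (cocompact (StrongDual ℝ V)) := by
    rw [← Metric.cobounded_eq_cocompact, ← tendsto_norm_atTop_iff_cobounded]
    simp only [norm_smul, norm_mul, mul_assoc]
    exact ((tendsto_norm_atTop_atTop.atTop_mul_const (norm_pos_iff.mpr hL)).const_mul_atTop
      (norm_pos_iff.mpr (by simp [Real.pi_ne_zero])))
  refine ((tendsto_integral_exp_smul_cocompact (S.indicator fun p => (g p : ℂ)) μ).comp
    hfreq).congr fun k => ?_
  rw [← integral_indicator hS]
  refine integral_congr_ae (Eventually.of_forall fun p => ?_)
  by_cases hp : p ∈ S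
  · simp only [hp, indicator_of_mem, Circle.smul_def, Real.fourierChar_apply, smul_eq_mul]
    congr 3
    simp only [smul_apply, smul_eq_mul]
    push_cast
    field_simp
  · simp [hp]

theorem tendsto_setIntegral_mul_sin (hS : MeasurableSet S) (hL : L ≠ 0)
    (hg : IntegrableOn g S μ) :
    Tendsto (fun k : ℝ => ∫ p in S, g p * Real.sin (k * L p) ∂μ) atTop (𝓝 0) := by
  refine ((Complex.continuous_im.tendsto _).comp
    (tendsto_setIntegral_cexp_mul (μ := μ) hS hL g)).congr fun k => ?_
  rw [comp_apply, ← RCLike.im_to_complex, ← integral_im (integrableOn_cexp_mul L hg k)]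
  simp only [RCLike.im_to_complex, Complex.im_mul_ofReal, Complex.exp_ofReal_mul_I_im,
    mul_comm (Real.sin _)]

theorem tendsto_setIntegral_mul_cos (hS : MeasurableSet S) (hL : L ≠ 0)
    (hg : IntegrableOn g S μ) :
    Tendsto (fun k : ℝ => ∫ p in S, g p * Real.cos (k * L p) ∂μ) atTop (𝓝 0) := by
  refine ((Complex.continuous_re.tendsto _).comp
    (tendsto_setIntegral_cexp_mul (μ := μ) hS hL g)).congr fun k => ?_
  rw [comp_apply, ← RCLike.re_to_complex, ← integral_re (integrableOn_cexp_mul L hg k)]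
  simp only [RCLike.re_to_complex, Complex.re_mul_ofReal, Complex.exp_ofReal_mul_I_re,
    mul_comm (Real.cos _)]

theorem tendsto_setIntegral_mul_sin_sq (hS : MeasurableSet S) (hL : L ≠ 0)
    (hg : IntegrableOn g S μ) :
    Tendsto (fun k : ℝ => ∫ p in S, g p * Real.sin (k * L p) ^ 2 ∂μ) atTop
      (𝓝 ((∫ p in S, g p ∂μ) / 2)) := by
  have hcos : Tendsto (fun k : ℝ => ∫ p in S, g p * Real.cos (2 * k * L p) ∂μ) atTop (𝓝 0) :=
    (tendsto_setIntegral_mul_cos hS hL hg).comp (tendsto_id.const_mul_atTop two_pos)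
  have hlim := (hcos.const_sub (∫ p in S, g p ∂μ)).div_const 2
  rw [sub_zero] at hlim
  refine hlim.congr fun k => ?_
  have hint : IntegrableOn (fun p => g p * Real.cos (2 * k * L p)) S μ :=
    hg.mul_bdd (c := 1) (Continuous.aestronglyMeasurable (by fun_prop))
      (Eventually.of_forall fun p => Real.abs_cos_le_one _)
  rw [← integral_sub hg hint, ← integral_div]
  refine integral_congr_ae (Eventually.of_forall fun p => ?_)
  simp only [Real.sin_sq_eq_half_sub, mul_assoc 2 k]
  ring

theorem tendsto_setIntegral_mul_sin_add_mul_sin_sq {h : V → ℝ} (hS : MeasurableSet S) (hL : L ≠ 0)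
    (hg : IntegrableOn g S μ) (hh : IntegrableOn h S μ) :
    Tendsto (fun k : ℝ => ∫ p in S, g p * Real.sin (k * L p) + h p * Real.sin (k * L p) ^ 2 ∂μ)
      atTop (𝓝 ((∫ p in S, h p ∂μ) / 2)) := by
  have hlim := (tendsto_setIntegral_mul_sin hS hL hg).add (tendsto_setIntegral_mul_sin_sq hS hL hh)
  rw [zero_add] at hlim
  refine hlim.congr fun k => (integral_add ?_ ?_).symm
  · exact hg.mul_bdd (c := 1) (Continuous.aestronglyMeasurable (by fun_prop))
      (Eventually.of_forall fun p => Real.abs_sin_le_one _)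
  · exact hh.mul_bdd (c := 1) (Continuous.aestronglyMeasurable (by fun_prop))
      (Eventually.of_forall fun p => by simpa using Real.abs_sin_le_one _)

end Oscillation

theorem tendsto_integral_of_tendsto_sub {α ι : Type*} [MeasurableSpace α] {μ : Measure α}
    [IsFiniteMeasure μ] {l : Filter ι} [l.IsCountablyGenerated] {F R : ι → α → ℝ} {A : α → ℝ}
    {B c : ℝ} (hF : ∀ᶠ i in l, AEStronglyMeasurable (F i) μ)
    (hR : ∀ᶠ i in l, AEStronglyMeasurable (R i) μ) (hFB : ∀ᶠ i in l, ∀ᵐ x ∂μ, |F i x| ≤ B)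
    (hRB : ∀ᶠ i in l, ∀ᵐ x ∂μ, |R i x| ≤ B)
    (hlim : ∀ᵐ x ∂μ, Tendsto (fun i => F i x - R i x) l (𝓝 (A x)))
    (hRlim : Tendsto (fun i => ∫ x, R i x ∂μ) l (𝓝 c)) :
    Tendsto (fun i => ∫ x, F i x ∂μ) l (𝓝 ((∫ x, A x ∂μ) + c)) := by
  have hdiff : Tendsto (fun i => ∫ x, F i x - R i x ∂μ) l (𝓝 (∫ x, A x ∂μ)) := by
    refine tendsto_integral_filter_of_dominated_convergence (fun _ => B + B) ?_ ?_
      (integrable_const _) hlim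
    · filter_upwards [hF, hR] with i hFi hRi using hFi.sub hRi
    · filter_upwards [hFB, hRB] with i hFi hRi
      filter_upwards [hFi, hRi] with x hFx hRx
      exact (abs_sub _ _).trans (add_le_add hFx hRx)
  refine (hdiff.add hRlim).congr' ?_
  filter_upwards [hF, hR, hFB, hRB] with i hFi hRi hFBi hRBi
  have hFint : Integrable (F i) μ := .of_bound hFi B hFBi
  have hRint : Integrable (R i) μ := .of_bound hRi B hRBi
  rw [integral_sub hFint hRint, sub_add_cancel]

theorem exists_isCompact_lt_setIntegral {X : Type*} [TopologicalSpace X] [LocallyCompactSpace X]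
    [SecondCountableTopology X] [T2Space X] [MeasurableSpace X] [BorelSpace X] {μ : Measure X}
    {E : Set X} {m : X → ℝ} {c : ℝ} (hE : IsOpen E) (hm : IntegrableOn m E μ)
    (hc : c < ∫ x in E, m x ∂μ) : ∃ K ⊆ E, IsCompact K ∧ c < ∫ x in K, m x ∂μ := by
  have : LocallyCompactSpace E := hE.locallyCompactSpace
  let K (n : ℕ) : Set X := Subtype.val '' (CompactExhaustion.choice E n)
  have hK (n : ℕ) : IsCompact (K n) :=
    ((CompactExhaustion.choice E).isCompact n).image continuous_subtype_val
  have hKE : ⋃ n, K n = E := by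
    rw [← image_iUnion, CompactExhaustion.iUnion_eq, image_univ, Subtype.range_coe]
  have hmono : Monotone K := fun i j hij =>
    image_mono ((CompactExhaustion.choice E).subset hij)
  have hlim := tendsto_setIntegral_of_monotone (f := m) (μ := μ)
    (fun n => (hK n).measurableSet) hmono (by rwa [hKE])
  rw [hKE] at hlim
  obtain ⟨n, hn⟩ := (hlim.eventually_const_lt hc).exists
  exact ⟨K n, hKE ▸ subset_iUnion K n, hK n, hn⟩

section SmoothMinorant

variable {V : Type*} [NormedAddCommGroup V] [NormedSpace ℝ V] [FiniteDimensional ℝ V]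
  {E C : Set V} {m : V → ℝ}

theorem exists_contDiff_between (hE : IsOpen E) (hm : ContinuousOn m E) (hpos : ∀ p ∈ E, 0 < m p)
    (hC : IsCompact C) (hCE : C ⊆ E) {θ : ℝ} (hθ : θ < 1) :
    ∃ ψ : V → ℝ, ContDiff ℝ ∞ ψ ∧ HasCompactSupport ψ ∧ tsupport ψ ⊆ E ∧ (∀ p, 0 ≤ ψ p) ∧
      (∀ p ∈ E, ψ p < m p) ∧ ∀ p ∈ C, θ * m p < ψ p := by
  obtain ⟨K, hK, hCK, hKE⟩ := exists_compact_between hC hE hCE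
  let t (p : V) : Set ℝ :=
    {z | 0 ≤ z ∧ (p ∈ K → z < m p) ∧ (p ∈ C → θ * m p < z) ∧ (p ∉ K → z = 0)}
  have hconvex (p : V) : Convex ℝ (t p) := by
    refine OrdConnected.convex ⟨?_⟩
    rintro x ⟨hx, -, hxC, -⟩ y ⟨-, hyK, -, hy'⟩ z ⟨hxz, hzy⟩
    exact ⟨hx.trans hxz, fun h => hzy.trans_lt (hyK h), fun h => (hxC h).trans_le hxz,
      fun h => le_antisymm (hzy.trans (hy' h).le) (hx.trans hxz)⟩
  have hlocal (p : V) : ∃ z, ∀ᶠ q in 𝓝 p, z ∈ t q := by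
    by_cases hp : p ∈ C
    · have hpE : E ∈ 𝓝 p := hE.mem_nhds (hCE hp)
      have hmp : ContinuousAt m p := hm.continuousAt hpE
      have hp0 : 0 < m p := hpos p (hCE hp)
      obtain ⟨z, hz, hzm⟩ : ∃ z, max 0 (θ * m p) < z ∧ z < m p :=
        exists_between (max_lt hp0 (by nlinarith))
      obtain ⟨hz0, hzθ⟩ := max_lt_iff.mp hz
      refine ⟨z, ?_⟩
      filter_upwards [isOpen_interior.mem_nhds (hCK hp), hmp.eventually_const_lt hzm,
        (hmp.const_mul θ).eventually_lt_const hzθ] with q hqK hqm hqθ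
      exact ⟨hz0.le, fun _ => hqm, fun _ => hqθ, fun h => absurd (interior_subset hqK) h⟩
    · refine ⟨0, ?_⟩
      filter_upwards [hC.isClosed.isOpen_compl.mem_nhds hp] with q hq
      exact ⟨le_rfl, fun h => hpos q (hKE h), fun h => absurd h hq, fun _ => rfl⟩
  obtain ⟨ψ, hψ⟩ := exists_contMDiffMap_forall_mem_convex_of_local_const 𝓘(ℝ, V) (n := ⊤)
    hconvex hlocal
  have hsupp : tsupport ψ ⊆ K := closure_minimal
    (fun p hp => by_contra fun h => hp ((hψ p).2.2.2 h)) hK.isClosed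
  refine ⟨ψ, ψ.contMDiff.contDiff, .intro hK fun p hp => (hψ p).2.2.2 hp, hsupp.trans hKE,
    fun p => (hψ p).1, fun p hp => ?_, fun p hp => (hψ p).2.2.1 hp⟩
  by_cases hpK : p ∈ K
  · exact (hψ p).2.1 hpK
  · exact ((hψ p).2.2.2 hpK).trans_lt (hpos p hp)

theorem exists_contDiff_lt_setIntegral [MeasurableSpace V] [BorelSpace V] {μ : Measure V}
    [IsFiniteMeasureOnCompacts μ] {c : ℝ} (hE : IsOpen E) (hm : ContinuousOn m E)
    (hint : IntegrableOn m E μ) (hpos : ∀ p ∈ E, 0 < m p) (hc : c < ∫ p in E, m p ∂μ) :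
    ∃ ψ : V → ℝ, ContDiff ℝ ∞ ψ ∧ HasCompactSupport ψ ∧ tsupport ψ ⊆ E ∧ (∀ p, 0 ≤ ψ p) ∧
      (∀ p ∈ E, ψ p < m p) ∧ c < ∫ p in E, ψ p ∂μ := by
  obtain ⟨C, hCE, hC, hcC⟩ := exists_isCompact_lt_setIntegral hE hint hc
  obtain ⟨θ, hθ, hcθ⟩ : ∃ θ < 1, c < θ * ∫ p in C, m p ∂μ := by
    have hlim : Tendsto (fun θ : ℝ => θ * ∫ p in C, m p ∂μ) (𝓝[<] 1) (𝓝 (∫ p in C, m p ∂μ)) := by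
      simpa only [one_mul] using
        ((continuous_mul_const (∫ p in C, m p ∂μ)).tendsto 1).mono_left nhdsWithin_le_nhds
    exact (eventually_mem_nhdsWithin.and (hlim.eventually_const_lt hcC)).exists
  obtain ⟨ψ, hψ, hcs, hsupp, hψ0, hψm, hψC⟩ := exists_contDiff_between hE hm hpos hC hCE hθ
  have hψint : Integrable ψ μ := hψ.continuous.integrable_of_hasCompactSupport hcs
  refine ⟨ψ, hψ, hcs, hsupp, hψ0, hψm, ?_⟩
  calc c < ∫ p in C, θ * m p ∂μ := by rwa [integral_const_mul]
    _ ≤ ∫ p in C, ψ p ∂μ :=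
        setIntegral_mono_on ((hint.mono_set hCE).const_mul θ) hψint.integrableOn
          hC.measurableSet fun p hp => (hψC p hp).le
    _ ≤ ∫ p in E, ψ p ∂μ :=
        setIntegral_mono_set hψint.integrableOn (Eventually.of_forall hψ0) hCE.eventuallyLE

end SmoothMinorant

/-- The derivative of `φ` in the direction `v`, as a function of the base point. -/
def dirDeriv {V : Type*} [NormedAddCommGroup V] [NormedSpace ℝ V] (v : V) (φ : V → ℝ) (p : V) :
    ℝ :=
  fderiv ℝ φ p v

/-- The partial derivatives in `x` and in `t` of a function of `p = (x, t)`. -/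
local notation "Dₓ" => dirDeriv ((1 : ℝ), (0 : ℝ))
local notation "Dₜ" => dirDeriv ((0 : ℝ), (1 : ℝ))

section DirectionalDerivative

variable {V : Type*} [NormedAddCommGroup V] [NormedSpace ℝ V] {φ : V → ℝ} {v w : V}

theorem contDiff_dirDeriv (hφ : ContDiff ℝ ∞ φ) (v : V) : ContDiff ℝ ∞ (dirDeriv v φ) :=
  (hφ.fderiv_right (m := ∞) le_rfl).clm_apply contDiff_const

theorem tsupport_dirDeriv_subset (v : V) : tsupport (dirDeriv v φ) ⊆ tsupport φ :=
  tsupport_fderiv_apply_subset ℝ v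

theorem dirDeriv_eq_zero_of_notMem_tsupport {p : V} (v : V) (hp : p ∉ tsupport φ) :
    dirDeriv v φ p = 0 :=
  image_eq_zero_of_notMem_tsupport fun h => hp (tsupport_dirDeriv_subset v h)

theorem hasDerivAt_partial_fst {φ : ℝ × ℝ → ℝ} (hφ : Differentiable ℝ φ) (x t : ℝ) :
    HasDerivAt (fun y => φ (y, t)) (Dₓ φ (x, t)) x :=
  (hφ (x, t)).hasFDerivAt.comp_hasDerivAt x ((hasDerivAt_id x).prodMk (hasDerivAt_const x t))

theorem hasDerivAt_partial_snd {φ : ℝ × ℝ → ℝ} (hφ : Differentiable ℝ φ) (x t : ℝ) :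
    HasDerivAt (fun τ => φ (x, τ)) (Dₜ φ (x, t)) t :=
  (hφ (x, t)).hasFDerivAt.comp_hasDerivAt t ((hasDerivAt_const t x).prodMk (hasDerivAt_id t))

end DirectionalDerivative

section Corrector

variable {V : Type*} [NormedAddCommGroup V] [NormedSpace ℝ V]

/-- The high-frequency corrector `-k⁻² ψ sin (k L)`: as `k → ∞` it vanishes uniformly with its first
derivatives, while its second derivatives oscillate with amplitude proportional to `ψ`. -/
def corrector (L : StrongDual ℝ V) (ψ : V → ℝ) (k : ℝ) (p : V) : ℝ :=
  -((k ^ 2)⁻¹ * (ψ p * Real.sin (k * L p)))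

variable {L : StrongDual ℝ V} {ψ : V → ℝ} {v w : V}

theorem contDiff_corrector (hψ : ContDiff ℝ ∞ ψ) (k : ℝ) : ContDiff ℝ ∞ (corrector L ψ k) :=
  (contDiff_const.mul (hψ.mul (contDiff_const.mul L.contDiff).sin)).neg

theorem tsupport_corrector_subset (k : ℝ) : tsupport (corrector L ψ k) ⊆ tsupport ψ :=
  closure_mono fun p hp h => hp (by simp [corrector, h])

theorem dirDeriv_corrector (hψ : ContDiff ℝ ∞ ψ) (v : V) (k : ℝ) :
    dirDeriv v (corrector L ψ k) = fun p =>
      -((k ^ 2)⁻¹ * (dirDeriv v ψ p * Real.sin (k * L p)))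
        - k⁻¹ * (L v * ψ p * Real.cos (k * L p)) := by
  funext p
  have hsin := ((L.hasFDerivAt (x := p)).const_mul k).sin
  have hψp := ((hψ.differentiable (by simp)) p).hasFDerivAt
  have hφ : HasFDerivAt (corrector L ψ k) _ p := ((hψp.mul hsin).const_mul (k ^ 2)⁻¹).neg
  rw [dirDeriv, hφ.fderiv]
  simp only [neg_apply, smul_apply, add_apply, smul_eq_mul, dirDeriv]
  rcases eq_or_ne k 0 with rfl | hk
  · simp
  · field_simp
    ring

theorem dirDeriv_dirDeriv_corrector (hψ : ContDiff ℝ ∞ ψ) (v w : V) {k : ℝ} (hk : k ≠ 0) :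
    dirDeriv w (dirDeriv v (corrector L ψ k)) = fun p =>
      L v * L w * (ψ p * Real.sin (k * L p))
        - (k ^ 2)⁻¹ * (dirDeriv w (dirDeriv v ψ) p * Real.sin (k * L p))
        - k⁻¹ * ((L w * dirDeriv v ψ p + L v * dirDeriv w ψ p) * Real.cos (k * L p)) := by
  funext p
  have hsin := ((L.hasFDerivAt (x := p)).const_mul k).sin
  have hcos := ((L.hasFDerivAt (x := p)).const_mul k).cos
  have hψp := ((hψ.differentiable (by simp)) p).hasFDerivAt
  have hψv := (((contDiff_dirDeriv hψ v).differentiable (by simp)) p).hasFDerivAt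
  have hφ := ((hψv.mul hsin).const_mul (k ^ 2)⁻¹).neg.sub
    (((hψp.const_mul (L v)).mul hcos).const_mul k⁻¹)
  rw [dirDeriv_corrector hψ]
  refine (DFunLike.congr_fun hφ.fderiv w).trans ?_
  simp only [neg_apply, smul_apply, add_apply, sub_apply, smul_eq_mul, dirDeriv]
  field_simp
  ring

theorem tendstoUniformly_mul_of_bounded {ι X : Type*} [TopologicalSpace X] {l : Filter ι}
    {a : ι → ℝ} {g : X → ℝ} {s : ι → X → ℝ} (ha : Tendsto a l (𝓝 0)) (hg : Continuous g)
    (hcs : HasCompactSupport g) (hs : ∀ i p, |s i p| ≤ 1) :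
    TendstoUniformly (fun i p => a i * (g p * s i p)) 0 l := by
  obtain ⟨C, hC⟩ := hg.bounded_above_of_compact_support hcs
  have hlim : Tendsto (fun i => |a i| * C) l (𝓝 0) := by simpa using ha.abs.mul_const C
  refine Metric.tendstoUniformly_iff.mpr fun ε hε => ?_
  filter_upwards [hlim.eventually_lt_const hε] with i hi p
  rw [Pi.zero_apply, dist_zero_left]
  refine lt_of_le_of_lt ?_ hi
  calc ‖a i * (g p * s i p)‖ = |a i| * (‖g p‖ * |s i p|) := by simp
    _ ≤ |a i| * (‖g p‖ * 1) := by gcongr; exact hs i p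
    _ ≤ |a i| * C := by gcongr; simpa using hC p

theorem tendsto_inv_sq_atTop : Tendsto (fun k : ℝ => (k ^ 2)⁻¹) atTop (𝓝 0) :=
  tendsto_inv_atTop_zero.comp (tendsto_pow_atTop two_ne_zero)

theorem tendstoUniformly_corrector (hψ : ContDiff ℝ ∞ ψ) (hcs : HasCompactSupport ψ) :
    TendstoUniformly (corrector L ψ) 0 atTop := by
  rw [← neg_zero]
  exact (tendstoUniformly_mul_of_bounded tendsto_inv_sq_atTop hψ.continuous hcs
    fun k p => Real.abs_sin_le_one (k * L p)).neg

theorem tendstoUniformly_dirDeriv_corrector (hψ : ContDiff ℝ ∞ ψ) (hcs : HasCompactSupport ψ)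
    (v : V) : TendstoUniformly (fun k => dirDeriv v (corrector L ψ k)) 0 atTop := by
  have hsin := tendstoUniformly_mul_of_bounded tendsto_inv_sq_atTop
    (contDiff_dirDeriv hψ v).continuous (hcs.fderiv_apply ℝ v)
    fun k p => Real.abs_sin_le_one (k * L p)
  have hcos := tendstoUniformly_mul_of_bounded tendsto_inv_atTop_zero
    (hψ.continuous.const_mul (L v)) hcs.mul_left fun k p => Real.abs_cos_le_one (k * L p)
  have hsum := hsin.neg.sub hcos
  rw [neg_zero, sub_zero] at hsum
  simp only [dirDeriv_corrector hψ]
  exact hsum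

theorem tendstoUniformly_dirDeriv_dirDeriv_corrector (hψ : ContDiff ℝ ∞ ψ)
    (hcs : HasCompactSupport ψ) (v w : V) :
    TendstoUniformly (fun k p => dirDeriv w (dirDeriv v (corrector L ψ k)) p
      - L v * L w * (ψ p * Real.sin (k * L p))) 0 atTop := by
  have hsin := tendstoUniformly_mul_of_bounded tendsto_inv_sq_atTop
    (contDiff_dirDeriv (contDiff_dirDeriv hψ v) w).continuous
    ((hcs.fderiv_apply ℝ v).fderiv_apply ℝ w) fun k p => Real.abs_sin_le_one (k * L p)
  have hcos := tendstoUniformly_mul_of_bounded tendsto_inv_atTop_zero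
    (((contDiff_dirDeriv hψ v).continuous.const_mul (L w)).add
      ((contDiff_dirDeriv hψ w).continuous.const_mul (L v)))
    ((hcs.fderiv_apply ℝ v).mul_left.add (hcs.fderiv_apply ℝ w).mul_left)
    fun k p => Real.abs_cos_le_one (k * L p)
  have hsum := hsin.neg.sub hcos
  rw [neg_zero, sub_zero] at hsum
  refine (tendstoUniformly_congr ?_).mp hsum
  filter_upwards [eventually_ne_atTop 0] with k hk
  funext p
  simp only [dirDeriv_dirDeriv_corrector hψ v w hk, Pi.sub_apply, Pi.neg_apply,
    Pi.add_apply]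
  ring

end Corrector

section SpaceTime

variable {ι : Type*} {l : Filter ι} {T : ℝ} {g : ℝ → ℝ → ℝ}

theorem isOpen_omegaT (T : ℝ) : IsOpen (OmegaT T) := isOpen_Ioo.prod isOpen_Ioo

theorem omegaT_subset_clOmegaT (T : ℝ) : OmegaT T ⊆ ClOmegaT T :=
  prod_mono Ioo_subset_Icc_self Ioo_subset_Icc_self

theorem isCompact_clOmegaT (T : ℝ) : IsCompact (ClOmegaT T) := isCompact_Icc.prod isCompact_Icc

theorem volume_omegaT_pos (hT : 0 < T) : 0 < volume (OmegaT T) :=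
  (isOpen_omegaT T).measure_pos volume
    ((nonempty_Ioo.mpr one_pos).prod (nonempty_Ioo.mpr hT))

theorem volume_lt_top_of_subset_omegaT {E : Set (ℝ × ℝ)} (hE : E ⊆ OmegaT T) : volume E < ⊤ :=
  (measure_mono (hE.trans (omegaT_subset_clOmegaT T))).trans_lt
    (isCompact_clOmegaT T).measure_lt_top

theorem essSupAbs_le (hT : 0 < T) {B : ℝ}
    (hg : ∀ᵐ p ∂(volume.restrict (OmegaT T)), |g p.1 p.2| ≤ B) : EssSupAbs T g ≤ B := by
  have : NeBot (ae (volume.restrict (OmegaT T))) := by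
    rw [ae_neBot, Ne, Measure.restrict_eq_zero]
    exact (volume_omegaT_pos hT).ne'
  exact limsup_le_of_le (IsCoboundedUnder.of_frequently_ge (a := 0)
    (Frequently.of_forall fun p => abs_nonneg _)) hg

theorem ae_le_essSupAbs (hg : ContinuousOn (fun p : ℝ × ℝ => g p.1 p.2) (ClOmegaT T)) :
    ∀ᵐ p ∂(volume.restrict (OmegaT T)), |g p.1 p.2| ≤ EssSupAbs T g := by
  obtain ⟨B, hB⟩ := (isCompact_clOmegaT T).exists_bound_of_continuousOn hg
  exact ae_le_essSup ⟨B, eventually_map.mpr (ae_restrict_of_forall_mem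
    (isOpen_omegaT T).measurableSet fun p hp => hB p (omegaT_subset_clOmegaT T hp))⟩

theorem eventually_essSupAbs_lt (hT : 0 < T) {G : ι → ℝ → ℝ → ℝ} {B : ℝ}
    (hg : ContinuousOn (fun p : ℝ × ℝ => g p.1 p.2) (ClOmegaT T))
    (hG : TendstoUniformlyOn (fun i (p : ℝ × ℝ) => G i p.1 p.2) (fun p => g p.1 p.2) l (OmegaT T))
    (hB : EssSupAbs T g < B) : ∀ᶠ i in l, EssSupAbs T (G i) < B := by
  have hB' : 0 < (B - EssSupAbs T g) / 2 := by linarith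
  filter_upwards [Metric.tendstoUniformlyOn_iff.mp hG _ hB'] with i hi
  refine lt_of_le_of_lt (b := EssSupAbs T g + (B - EssSupAbs T g) / 2)
    (essSupAbs_le hT ?_) (by linarith)
  filter_upwards [ae_le_essSupAbs hg, ae_restrict_mem (isOpen_omegaT T).measurableSet] with p hp hpΩ
  have hdist : |G i p.1 p.2 - g p.1 p.2| ≤ (B - EssSupAbs T g) / 2 := by
    rw [abs_sub_comm]
    exact (hi p hpΩ).le
  linarith [abs_sub_abs_le_abs_sub (G i p.1 p.2) (g p.1 p.2)]

end SpaceTime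

theorem tendstoUniformlyOn_continuousOn_mul_zero {ι X : Type*} [TopologicalSpace X] {l : Filter ι}
    {K : Set X} {b : X → ℝ} {F : ι → X → ℝ} (hK : IsCompact K) (hb : ContinuousOn b K)
    (hF : TendstoUniformlyOn F 0 l K) : TendstoUniformlyOn (fun i x => b x * F i x) 0 l K := by
  obtain ⟨C, hC⟩ := hK.exists_bound_of_continuousOn hb
  rw [Metric.tendstoUniformlyOn_iff] at hF ⊢
  intro ε hε
  have hC' : 0 < |C| + 1 := by positivity
  filter_upwards [hF (ε / (|C| + 1)) (div_pos hε hC')] with i hi x hx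
  have hFx := hi x hx
  rw [Pi.zero_apply, dist_zero_left] at hFx ⊢
  calc ‖b x * F i x‖ = ‖b x‖ * ‖F i x‖ := norm_mul _ _
    _ ≤ (|C| + 1) * ‖F i x‖ := by
        gcongr
        linarith [hC x hx, le_abs_self C]
    _ < ε := by rwa [lt_div_iff₀' hC'] at hFx

/-- The part of `CoeffHyp` that does not involve Hölder regularity. -/
structure ContinuousCoeff (T : ℝ) (b bx c f : ℝ → ℝ → ℝ) (d : ℝ → ℝ) : Prop where
  b_cont : ContinuousOn (fun p : ℝ × ℝ => b p.1 p.2) (ClOmegaT T)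
  b_deriv : ∀ p ∈ ClOmegaT T, HasDerivWithinAt (fun y => b y p.2) (bx p.1 p.2) (Icc (0:ℝ) 1) p.1
  bx_cont : ContinuousOn (fun p : ℝ × ℝ => bx p.1 p.2) (ClOmegaT T)
  c_cont : ContinuousOn (fun p : ℝ × ℝ => c p.1 p.2) (ClOmegaT T)
  f_cont : ContinuousOn (fun p : ℝ × ℝ => f p.1 p.2) (ClOmegaT T)
  d_cont : ContinuousOn d (Icc (0:ℝ) T)
  c_eq : ∀ p ∈ ClOmegaT T, c p.1 p.2 = bx p.1 p.2 + d p.2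

namespace PairData

/-- The quantity `v_t - b u - P_u - F` attached to a pair `w = (u,v)`, as a function of `(x,t)`. -/
def flux (b c bx f : ℝ → ℝ → ℝ) (W : PairData) (p : ℝ × ℝ) : ℝ :=
  GVal b c bx f W.u W.vt p.1 p.2

/-- The pair `(u + ∂ₓ φ, v + φ)`; adding a pair of this form preserves the constraint `v_x = u`. -/
def perturb (W : PairData) (φ : ℝ × ℝ → ℝ) : PairData where
  u x t := W.u x t + Dₓ φ (x, t)
  ux x t := W.ux x t + Dₓ (Dₓ φ) (x, t)
  uxx x t := W.uxx x t + Dₓ (Dₓ (Dₓ φ)) (x, t)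
  ut x t := W.ut x t + Dₜ (Dₓ φ) (x, t)
  v x t := W.v x t + φ (x, t)
  vx x t := W.vx x t + Dₓ φ (x, t)
  vxx x t := W.vxx x t + Dₓ (Dₓ φ) (x, t)
  vxxx x t := W.vxxx x t + Dₓ (Dₓ (Dₓ φ)) (x, t)
  vt x t := W.vt x t + Dₜ φ (x, t)

/-- The topology of uniform convergence of `w = (u,v)`; the derivative data are ignored. -/
instance : TopologicalSpace PairData :=
  .induced (fun W => UniformFun.ofFun fun p : ℝ × ℝ => (W.u p.1 p.2, W.v p.1 p.2)) inferInstance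

end PairData

section Perturb

variable {T : ℝ} {b bx c f : ℝ → ℝ → ℝ} {d : ℝ → ℝ} {W : PairData} {φ : ℝ × ℝ → ℝ}

theorem C21.perturb (hW : C21 T W.u W.ux W.uxx W.ut) (hφ : ContDiff ℝ ∞ φ) :
    C21 T (W.perturb φ).u (W.perturb φ).ux (W.perturb φ).uxx (W.perturb φ).ut where
  dx p hp := (hW.dx p hp).add (hasDerivAt_partial_fst
    ((contDiff_dirDeriv hφ _).differentiable (by simp)) p.1 p.2).hasDerivWithinAt
  dxx p hp := (hW.dxx p hp).add (hasDerivAt_partial_fst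
    ((contDiff_dirDeriv (contDiff_dirDeriv hφ _) _).differentiable (by simp))
    p.1 p.2).hasDerivWithinAt
  dt p hp := (hW.dt p hp).add (hasDerivAt_partial_snd
    ((contDiff_dirDeriv hφ _).differentiable (by simp)) p.1 p.2).hasDerivWithinAt
  cont := hW.cont.add (contDiff_dirDeriv hφ _).continuous.continuousOn
  cont_x := hW.cont_x.add
    (contDiff_dirDeriv (contDiff_dirDeriv hφ _) _).continuous.continuousOn
  cont_xx := hW.cont_xx.add
    (contDiff_dirDeriv (contDiff_dirDeriv (contDiff_dirDeriv hφ _) _) _).continuous.continuousOn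
  cont_t := hW.cont_t.add
    (contDiff_dirDeriv (contDiff_dirDeriv hφ _) _).continuous.continuousOn

theorem C31.perturb (hW : C31 T W.v W.vx W.vxx W.vxxx W.vt) (hφ : ContDiff ℝ ∞ φ) :
    C31 T (W.perturb φ).v (W.perturb φ).vx (W.perturb φ).vxx (W.perturb φ).vxxx
      (W.perturb φ).vt where
  dx p hp := (hW.dx p hp).add
    (hasDerivAt_partial_fst (hφ.differentiable (by simp)) p.1 p.2).hasDerivWithinAt
  dxx p hp := (hW.dxx p hp).add (hasDerivAt_partial_fst
    ((contDiff_dirDeriv hφ _).differentiable (by simp)) p.1 p.2).hasDerivWithinAt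
  dxxx p hp := (hW.dxxx p hp).add (hasDerivAt_partial_fst
    ((contDiff_dirDeriv (contDiff_dirDeriv hφ _) _).differentiable (by simp))
    p.1 p.2).hasDerivWithinAt
  dt p hp := (hW.dt p hp).add
    (hasDerivAt_partial_snd (hφ.differentiable (by simp)) p.1 p.2).hasDerivWithinAt
  cont := hW.cont.add hφ.continuous.continuousOn
  cont_x := hW.cont_x.add (contDiff_dirDeriv hφ _).continuous.continuousOn
  cont_xx := hW.cont_xx.add
    (contDiff_dirDeriv (contDiff_dirDeriv hφ _) _).continuous.continuousOn
  cont_xxx := hW.cont_xxx.add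
    (contDiff_dirDeriv (contDiff_dirDeriv (contDiff_dirDeriv hφ _) _) _).continuous.continuousOn
  cont_t := hW.cont_t.add (contDiff_dirDeriv hφ _).continuous.continuousOn

theorem continuousOn_flux (hcoeff : ContinuousCoeff T b bx c f d)
    (hu : ContinuousOn (fun p : ℝ × ℝ => W.u p.1 p.2) (ClOmegaT T))
    (hvt : ContinuousOn (fun p : ℝ × ℝ => W.vt p.1 p.2) (ClOmegaT T)) :
    ContinuousOn (W.flux b c bx f) (ClOmegaT T) :=
  ((hvt.sub (hcoeff.b_cont.mul hu)).sub
    (continuousOn_intervalIntegral_left (g := fun y t => (c y t - bx y t) * W.u y t)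
      ((hcoeff.c_cont.sub hcoeff.bx_cont).mul hu))).sub
    (continuousOn_intervalIntegral_left hcoeff.f_cont)

/-- This is where `c = b_x + d(t)` enters: the nonlocal term responds locally to `φ`. -/
theorem pot_perturb (hcoeff : ContinuousCoeff T b bx c f d)
    (hu : ContinuousOn (fun p : ℝ × ℝ => W.u p.1 p.2) (ClOmegaT T)) (hφ : ContDiff ℝ ∞ φ)
    (hsupp : tsupport φ ⊆ OmegaT T) {p : ℝ × ℝ} (hp : p ∈ ClOmegaT T) :
    Pot c bx (W.perturb φ).u p.1 p.2 = Pot c bx W.u p.1 p.2 + d p.2 * φ p := by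
  obtain ⟨x, t⟩ := p
  obtain ⟨⟨hx0, hx1⟩, ht⟩ := hp
  dsimp only at hx0 hx1 ht ⊢
  have hline : MapsTo (fun y : ℝ => (y, t)) (Icc 0 x) (ClOmegaT T) := fun y hy =>
    ⟨⟨hy.1, hy.2.trans hx1⟩, ht⟩
  have hlinec : ContinuousOn (fun y : ℝ => (y, t)) (Icc 0 x) := by fun_prop
  have hint : IntervalIntegrable (fun y => (c y t - bx y t) * W.u y t) volume 0 x :=
    ContinuousOn.intervalIntegrable_of_Icc hx0 (((hcoeff.c_cont.sub hcoeff.bx_cont).mul hu).comp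
      hlinec hline)
  have hφx : Continuous fun y => Dₓ φ (y, t) :=
    (contDiff_dirDeriv hφ _).continuous.comp (by fun_prop)
  have hφ0 : φ (0, t) = 0 :=
    image_eq_zero_of_notMem_tsupport fun h => lt_irrefl _ (hsupp h).1.1
  calc Pot c bx (W.perturb φ).u x t
      = ∫ y in (0:ℝ)..x, ((c y t - bx y t) * W.u y t + d t * Dₓ φ (y, t)) := by
        refine intervalIntegral.integral_congr fun y hy => ?_
        rw [uIcc_of_le hx0] at hy
        simp only [PairData.perturb, hcoeff.c_eq (y, t) (hline hy)]
        ring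
    _ = Pot c bx W.u x t + d t * ∫ y in (0:ℝ)..x, Dₓ φ (y, t) := by
        rw [intervalIntegral.integral_add hint ((hφx.const_mul _).intervalIntegrable _ _),
          intervalIntegral.integral_const_mul, Pot]
    _ = Pot c bx W.u x t + d t * φ (x, t) := by
        rw [intervalIntegral.integral_eq_sub_of_hasDerivAt
          (fun y _ => hasDerivAt_partial_fst (hφ.differentiable (by simp)) y t)
          (hφx.intervalIntegrable _ _), hφ0, sub_zero]

theorem flux_perturb (hcoeff : ContinuousCoeff T b bx c f d)
    (hu : ContinuousOn (fun p : ℝ × ℝ => W.u p.1 p.2) (ClOmegaT T)) (hφ : ContDiff ℝ ∞ φ)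
    (hsupp : tsupport φ ⊆ OmegaT T) {p : ℝ × ℝ} (hp : p ∈ ClOmegaT T) :
    (W.perturb φ).flux b c bx f p =
      W.flux b c bx f p + (Dₜ φ p - b p.1 p.2 * Dₓ φ p - d p.2 * φ p) := by
  simp only [PairData.flux, GVal, pot_perturb hcoeff hu hφ hsupp hp]
  simp only [PairData.perturb]
  ring

variable {ι : Type*} {l : Filter ι} {Φ : ι → ℝ × ℝ → ℝ}

theorem tendstoUniformlyOn_flux_perturb (hcoeff : ContinuousCoeff T b bx c f d)
    (hu : ContinuousOn (fun p : ℝ × ℝ => W.u p.1 p.2) (ClOmegaT T))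
    (hΦ : ∀ i, ContDiff ℝ ∞ (Φ i)) (hsupp : ∀ i, tsupport (Φ i) ⊆ OmegaT T)
    (h0 : TendstoUniformly Φ 0 l) (hx : TendstoUniformly (fun i => Dₓ (Φ i)) 0 l)
    (ht : TendstoUniformly (fun i => Dₜ (Φ i)) 0 l) :
    TendstoUniformlyOn (fun i => (W.perturb (Φ i)).flux b c bx f) (W.flux b c bx f) l
      (ClOmegaT T) := by
  have hbx := tendstoUniformlyOn_continuousOn_mul_zero (isCompact_clOmegaT T) hcoeff.b_cont
    hx.tendstoUniformlyOn
  have hd : ContinuousOn (fun p : ℝ × ℝ => d p.2) (ClOmegaT T) :=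
    hcoeff.d_cont.comp continuousOn_snd fun p hp => hp.2
  have hdφ := tendstoUniformlyOn_continuousOn_mul_zero (isCompact_clOmegaT T) hd
    h0.tendstoUniformlyOn
  have hconst : TendstoUniformlyOn (fun _ : ι => W.flux b c bx f) (W.flux b c bx f) l
      (ClOmegaT T) := fun u hu => .of_forall fun _ _ _ => refl_mem_uniformity hu
  have hsum := hconst.add ((ht.tendstoUniformlyOn.sub hbx).sub hdφ)
  rw [sub_zero, sub_zero, add_zero] at hsum
  exact hsum.congr (.of_forall fun i p hp => (flux_perturb hcoeff hu (hΦ i) (hsupp i) hp).symm)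

theorem tendsto_perturb (h0 : TendstoUniformly Φ 0 l)
    (hx : TendstoUniformly (fun i => Dₓ (Φ i)) 0 l) :
    Tendsto (fun i => W.perturb (Φ i)) l (𝓝 W) := by
  rw [nhds_induced, tendsto_comap_iff, UniformFun.tendsto_iff_tendstoUniformly]
  refine Metric.tendstoUniformly_iff.mpr fun ε hε => ?_
  filter_upwards [Metric.tendstoUniformly_iff.mp hx ε hε, Metric.tendstoUniformly_iff.mp h0 ε hε]
    with i hxi h0i p
  simpa only [comp_apply, UniformFun.toFun_ofFun, PairData.perturb, Prod.dist_eq,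
    dist_self_add_right, Pi.zero_apply, dist_zero_left] using max_lt (hxi p) (h0i p)

theorem eventually_essSupAbs_dist_lt (hT : 0 < T) (W : PairData) {η : ℝ} (hη : 0 < η) :
    ∀ᶠ W' in 𝓝 W, EssSupAbs T (fun x t =>
      Real.sqrt ((W'.u x t - W.u x t) ^ 2 + (W'.v x t - W.v x t) ^ 2)) < η := by
  have hunif : TendstoUniformly (fun (W' : PairData) (p : ℝ × ℝ) => (W'.u p.1 p.2, W'.v p.1 p.2))
      (fun p => (W.u p.1 p.2, W.v p.1 p.2)) (𝓝 W) :=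
    UniformFun.tendsto_iff_tendstoUniformly.mp continuous_induced_dom.continuousAt
  filter_upwards [Metric.tendstoUniformly_iff.mp hunif (η / 4) (by positivity)] with W' hW'
  refine (essSupAbs_le hT (B := η / 2) (ae_of_all _ fun p => ?_)).trans_lt (by linarith)
  obtain ⟨hu, hv⟩ := max_lt_iff.mp (hW' p)
  rw [abs_of_nonneg (Real.sqrt_nonneg _), Real.sqrt_le_left (by positivity)]
  rw [dist_comm, Real.dist_eq, abs_lt] at hu hv
  nlinarith

end Perturb

theorem integrableOn_of_continuousOn_of_bounded {X : Type*} [TopologicalSpace X]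
    [MeasurableSpace X] [OpensMeasurableSpace X] {μ : Measure X}
    {E : Set X} {g : X → ℝ} {B : ℝ} (hE : MeasurableSet E) (hfin : μ E < ⊤)
    (hg : ContinuousOn g E) (hB : ∀ p ∈ E, |g p| ≤ B) : IntegrableOn g E μ :=
  .of_bound hfin (hg.aestronglyMeasurable hE) B (ae_restrict_of_forall_mem hE hB)

theorem exists_common_bound {X : Type*} [TopologicalSpace X] {K : Set X} {g h : X → ℝ}
    (hK : IsCompact K) (hg : ContinuousOn g K) (hh : ContinuousOn h K) :
    ∃ B, (∀ x ∈ K, |g x| ≤ B) ∧ ∀ x ∈ K, |h x| ≤ B := by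
  obtain ⟨B, hB⟩ := hK.exists_bound_of_continuousOn (hg.prodMk hh)
  exact ⟨B, fun x hx => (le_max_left _ _).trans (hB x hx),
    fun x hx => (le_max_right _ _).trans (hB x hx)⟩

/-- A classical pair `w = (u,v)` whose gradient lies in `U((x,t);u)` on `E`: the part of
admissibility that does not refer to the reference pair `w*`. -/
structure IsStrictSubsolution (T r1 r2 mstar : ℝ) (sm sp : ℝ → ℝ) (b bx c f : ℝ → ℝ → ℝ)
    (E : Set (ℝ × ℝ)) (W : PairData) : Prop where
  c21 : C21 T W.u W.ux W.uxx W.ut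
  c31 : C31 T W.v W.vx W.vxx W.vxxx W.vt
  gradInU : ∀ p ∈ E, GradInU r1 r2 mstar sm sp b c bx f W.u W.ux W.ut W.vx W.vt p

/-- The distance from `u_x` to the nearer of the two phases `S_w^±`. -/
def phaseGap (sm sp : ℝ → ℝ) (b bx c f : ℝ → ℝ → ℝ) (W : PairData) (p : ℝ × ℝ) : ℝ :=
  min (W.ux p.1 p.2 - sm (W.flux b c bx f p)) (sp (W.flux b c bx f p) - W.ux p.1 p.2)

/-- The Dirichlet energy `∫_E u_x²`. -/
def energy (E : Set (ℝ × ℝ)) (W : PairData) : ℝ := ∫ p in E, W.ux p.1 p.2 ^ 2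

section StrictSubsolution

variable {T r1 r2 mstar : ℝ} {sm sp : ℝ → ℝ} {b bx c f : ℝ → ℝ → ℝ} {d : ℝ → ℝ}
  {E : Set (ℝ × ℝ)} {W : PairData} {p : ℝ × ℝ}

theorem gradInU_iff :
    GradInU r1 r2 mstar sm sp b c bx f W.u W.ux W.ut W.vx W.vt p ↔
      W.vx p.1 p.2 = W.u p.1 p.2 ∧ |W.ut p.1 p.2| < mstar ∧
        W.flux b c bx f p ∈ Ioo r1 r2 ∧
        sm (W.flux b c bx f p) < W.ux p.1 p.2 ∧ W.ux p.1 p.2 < sp (W.flux b c bx f p) := by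
  simp only [GradInU, Uprime, PairData.flux, mem_ofPred_eq, mem_Ioo, and_assoc]

namespace IsStrictSubsolution

variable (hW : IsStrictSubsolution T r1 r2 mstar sm sp b bx c f E W)

include hW

theorem flux_mem_Ioo (hp : p ∈ E) : W.flux b c bx f p ∈ Ioo r1 r2 :=
  (gradInU_iff.mp (hW.gradInU p hp)).2.2.1

theorem sm_flux_lt_ux (hp : p ∈ E) : sm (W.flux b c bx f p) < W.ux p.1 p.2 :=
  (gradInU_iff.mp (hW.gradInU p hp)).2.2.2.1

theorem ux_lt_sp_flux (hp : p ∈ E) : W.ux p.1 p.2 < sp (W.flux b c bx f p) :=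
  (gradInU_iff.mp (hW.gradInU p hp)).2.2.2.2

theorem sm_flux_lt_sp_flux (hp : p ∈ E) : sm (W.flux b c bx f p) < sp (W.flux b c bx f p) :=
  (hW.sm_flux_lt_ux hp).trans (hW.ux_lt_sp_flux hp)

theorem phaseGap_pos (hp : p ∈ E) : 0 < phaseGap sm sp b bx c f W p :=
  lt_min (sub_pos.mpr (hW.sm_flux_lt_ux hp)) (sub_pos.mpr (hW.ux_lt_sp_flux hp))

theorem phaseGap_lt (hp : p ∈ E) :
    phaseGap sm sp b bx c f W p < sp (W.flux b c bx f p) - sm (W.flux b c bx f p) :=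
  (min_le_left _ _).trans_lt (sub_lt_sub_right (hW.ux_lt_sp_flux hp) _)

theorem abs_zfun_le_one (hp : p ∈ E) : |Zfun sm sp b bx c f W.u W.vt W.ux p| ≤ 1 := by
  have hl := sub_nonneg.mpr (hW.sm_flux_lt_ux hp).le
  have hlen := sub_nonneg.mpr (hW.sm_flux_lt_sp_flux hp).le
  refine (abs_of_nonneg (div_nonneg hl hlen)).trans_le ?_
  exact div_le_one_of_le₀ (sub_le_sub_right (hW.ux_lt_sp_flux hp).le _) hlen

theorem abs_ux_le {B : ℝ} (hsm : ∀ r ∈ Icc r1 r2, |sm r| ≤ B) (hsp : ∀ r ∈ Icc r1 r2, |sp r| ≤ B)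
    (hp : p ∈ E) : |W.ux p.1 p.2| ≤ B := by
  have hr := Ioo_subset_Icc_self (hW.flux_mem_Ioo hp)
  exact abs_le.mpr ⟨(abs_le.mp (hsm _ hr)).1.trans (hW.sm_flux_lt_ux hp).le,
    (hW.ux_lt_sp_flux hp).le.trans (abs_le.mp (hsp _ hr)).2⟩

theorem phaseGap_le {B : ℝ} (hsm : ∀ r ∈ Icc r1 r2, |sm r| ≤ B)
    (hsp : ∀ r ∈ Icc r1 r2, |sp r| ≤ B) (hp : p ∈ E) : phaseGap sm sp b bx c f W p ≤ 2 * B := by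
  have hr := Ioo_subset_Icc_self (hW.flux_mem_Ioo hp)
  linarith [hW.phaseGap_lt hp, (abs_le.mp (hsm _ hr)).1, (abs_le.mp (hsp _ hr)).2]

theorem energy_le {B : ℝ} (hE : E ⊆ OmegaT T) (hsm : ∀ r ∈ Icc r1 r2, |sm r| ≤ B)
    (hsp : ∀ r ∈ Icc r1 r2, |sp r| ≤ B) : energy E W ≤ B ^ 2 * volume.real E := by
  refine (Real.le_norm_self _).trans (norm_setIntegral_le_of_norm_le_const
    (volume_lt_top_of_subset_omegaT hE) fun p hp => ?_)
  rw [Real.norm_eq_abs, abs_pow]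
  gcongr
  exact hW.abs_ux_le hsm hsp hp

variable (hE : E ⊆ OmegaT T)

include hE

theorem continuousOn_ux : ContinuousOn (fun p => W.ux p.1 p.2) E :=
  hW.c21.cont_x.mono (hE.trans (omegaT_subset_clOmegaT T))

variable (hcoeff : ContinuousCoeff T b bx c f d)

include hcoeff

theorem continuousOn_comp_flux {g : ℝ → ℝ} (hg : ContinuousOn g (Icc r1 r2)) :
    ContinuousOn (fun p => g (W.flux b c bx f p)) E :=
  hg.comp ((continuousOn_flux hcoeff hW.c21.cont hW.c31.cont_t).mono
    (hE.trans (omegaT_subset_clOmegaT T))) fun _ hp => Ioo_subset_Icc_self (hW.flux_mem_Ioo hp)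

variable (hsm : ContinuousOn sm (Icc r1 r2)) (hsp : ContinuousOn sp (Icc r1 r2))

include hsm hsp

theorem continuousOn_phaseGap : ContinuousOn (phaseGap sm sp b bx c f W) E :=
  ((hW.continuousOn_ux hE).sub (hW.continuousOn_comp_flux hE hcoeff hsm)).inf
    ((hW.continuousOn_comp_flux hE hcoeff hsp).sub (hW.continuousOn_ux hE))

theorem continuousOn_zfun : ContinuousOn (Zfun sm sp b bx c f W.u W.vt W.ux) E :=
  ((hW.continuousOn_ux hE).sub (hW.continuousOn_comp_flux hE hcoeff hsm)).div
    ((hW.continuousOn_comp_flux hE hcoeff hsp).sub (hW.continuousOn_comp_flux hE hcoeff hsm))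
    fun _ hp => (sub_pos.mpr (hW.sm_flux_lt_sp_flux hp)).ne'

theorem integrableOn_phaseGap (hEo : IsOpen E) : IntegrableOn (phaseGap sm sp b bx c f W) E := by
  obtain ⟨B, hBm, hBp⟩ := exists_common_bound isCompact_Icc hsm hsp
  refine integrableOn_of_continuousOn_of_bounded hEo.measurableSet
    (volume_lt_top_of_subset_omegaT hE) (hW.continuousOn_phaseGap hE hcoeff hsm hsp)
    (B := 2 * B) fun p hp => ?_
  rw [abs_of_pos (hW.phaseGap_pos hp)]
  exact hW.phaseGap_le hBm hBp hp

end IsStrictSubsolution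

end StrictSubsolution

/-- The pair `w` perturbed by the corrector of amplitude `ψ` oscillating in `x` at frequency `k`;
to leading order this adds `ψ sin (k x)` to `u_x`. -/
def PairData.oscillate (W : PairData) (ψ : ℝ × ℝ → ℝ) (k : ℝ) : PairData :=
  W.perturb (corrector (.fst ℝ ℝ ℝ) ψ k)

section Oscillate

variable {T r1 r2 mstar : ℝ} {sm sp : ℝ → ℝ} {b bx c f : ℝ → ℝ → ℝ} {d : ℝ → ℝ}
  {E : Set (ℝ × ℝ)} {W : PairData} {ψ : ℝ × ℝ → ℝ}

theorem tendstoUniformly_add_of_zero {ι X : Type*} {l : Filter ι} {F : ι → X → ℝ}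
    (hF : TendstoUniformly F 0 l) (g : X → ℝ) : TendstoUniformly (fun i x => g x + F i x) g l := by
  simpa [Metric.tendstoUniformly_iff] using Metric.tendstoUniformly_iff.mp hF

theorem tendstoUniformly_oscillate_u (hψ : ContDiff ℝ ∞ ψ) (hcs : HasCompactSupport ψ) :
    TendstoUniformly (fun k (p : ℝ × ℝ) => (W.oscillate ψ k).u p.1 p.2)
      (fun p => W.u p.1 p.2) atTop :=
  tendstoUniformly_add_of_zero (tendstoUniformly_dirDeriv_corrector hψ hcs _) _

theorem tendstoUniformly_oscillate_ut (hψ : ContDiff ℝ ∞ ψ) (hcs : HasCompactSupport ψ) :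
    TendstoUniformly (fun k (p : ℝ × ℝ) => (W.oscillate ψ k).ut p.1 p.2)
      (fun p => W.ut p.1 p.2) atTop := by
  refine tendstoUniformly_add_of_zero ?_ _
  simpa using tendstoUniformly_dirDeriv_dirDeriv_corrector (L := .fst ℝ ℝ ℝ) hψ hcs (1, 0) (0, 1)

theorem tendstoUniformly_oscillate_ux (hψ : ContDiff ℝ ∞ ψ) (hcs : HasCompactSupport ψ) :
    TendstoUniformly (fun k (p : ℝ × ℝ) => (W.oscillate ψ k).ux p.1 p.2 - ψ p * Real.sin (k * p.1))
      (fun p => W.ux p.1 p.2) atTop := by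
  have h := tendstoUniformly_add_of_zero
    (tendstoUniformly_dirDeriv_dirDeriv_corrector (L := .fst ℝ ℝ ℝ) hψ hcs (1, 0) (1, 0))
    fun p => W.ux p.1 p.2
  simpa [PairData.oscillate, PairData.perturb, add_sub_assoc] using h

theorem tendsto_oscillate (hψ : ContDiff ℝ ∞ ψ) (hcs : HasCompactSupport ψ) :
    Tendsto (W.oscillate ψ) atTop (𝓝 W) :=
  tendsto_perturb (tendstoUniformly_corrector hψ hcs)
    (tendstoUniformly_dirDeriv_corrector hψ hcs _)

variable (hcoeff : ContinuousCoeff T b bx c f d)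

include hcoeff

theorem tendstoUniformlyOn_flux_oscillate
    (hu : ContinuousOn (fun p : ℝ × ℝ => W.u p.1 p.2) (ClOmegaT T)) (hψ : ContDiff ℝ ∞ ψ)
    (hcs : HasCompactSupport ψ) (hsupp : tsupport ψ ⊆ OmegaT T) :
    TendstoUniformlyOn (fun k => (W.oscillate ψ k).flux b c bx f) (W.flux b c bx f) atTop
      (ClOmegaT T) :=
  tendstoUniformlyOn_flux_perturb hcoeff hu (contDiff_corrector hψ)
    (fun k => (tsupport_corrector_subset k).trans hsupp) (tendstoUniformly_corrector hψ hcs)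
    (tendstoUniformly_dirDeriv_corrector hψ hcs _) (tendstoUniformly_dirDeriv_corrector hψ hcs _)

theorem gradInU_perturb_of_notMem_tsupport {φ : ℝ × ℝ → ℝ} {p : ℝ × ℝ}
    (hu : ContinuousOn (fun p : ℝ × ℝ => W.u p.1 p.2) (ClOmegaT T)) (hφ : ContDiff ℝ ∞ φ)
    (hsupp : tsupport φ ⊆ OmegaT T) (hp : p ∈ ClOmegaT T) (hpφ : p ∉ tsupport φ)
    (h : GradInU r1 r2 mstar sm sp b c bx f W.u W.ux W.ut W.vx W.vt p) :
    GradInU r1 r2 mstar sm sp b c bx f (W.perturb φ).u (W.perturb φ).ux (W.perturb φ).ut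
      (W.perturb φ).vx (W.perturb φ).vt p := by
  have hφp := image_eq_zero_of_notMem_tsupport hpφ
  have hφ' (v : ℝ × ℝ) := dirDeriv_eq_zero_of_notMem_tsupport v hpφ
  have hφ'' (v w : ℝ × ℝ) : dirDeriv w (dirDeriv v φ) p = 0 :=
    dirDeriv_eq_zero_of_notMem_tsupport w fun h => hpφ (tsupport_dirDeriv_subset v h)
  rw [gradInU_iff] at h ⊢
  rw [flux_perturb hcoeff hu hφ hsupp hp]
  simpa [PairData.perturb, hφp, hφ', hφ''] using h

namespace IsStrictSubsolution

variable (hW : IsStrictSubsolution T r1 r2 mstar sm sp b bx c f E W) (hE : E ⊆ OmegaT T)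
  (hψ : ContDiff ℝ ∞ ψ) (hcs : HasCompactSupport ψ) (hsupp : tsupport ψ ⊆ E)

include hW hE hψ hcs hsupp

theorem eventually_flux_oscillate_mem {K : Set (ℝ × ℝ)} (hK : IsCompact K) (hKE : K ⊆ E) :
    ∀ᶠ k in atTop, ∀ p ∈ K, (W.oscillate ψ k).flux b c bx f p ∈ Ioo r1 r2 := by
  have hKΩ : K ⊆ ClOmegaT T := hKE.trans (hE.trans (omegaT_subset_clOmegaT T))
  have hflux := (tendstoUniformlyOn_flux_oscillate (f := f) hcoeff hW.c21.cont hψ hcs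
    (hsupp.trans hE)).mono hKΩ
  have hcont : ContinuousOn (W.flux b c bx f) K :=
    (continuousOn_flux hcoeff hW.c21.cont hW.c31.cont_t).mono hKΩ
  have hl := eventually_forall_lt_of_tendstoUniformlyOn hK continuousOn_const hcont
    (fun p hp => (hW.flux_mem_Ioo (hKE hp)).1) (tendsto_const_nhds.tendstoUniformlyOn_const K)
    hflux
  have hr := eventually_forall_lt_of_tendstoUniformlyOn hK hcont continuousOn_const
    (fun p hp => (hW.flux_mem_Ioo (hKE hp)).2) hflux
    (tendsto_const_nhds.tendstoUniformlyOn_const K)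
  filter_upwards [hl, hr] with k hkl hkr p hp using ⟨hkl p hp, hkr p hp⟩

theorem tendstoUniformlyOn_comp_flux_oscillate {K : Set (ℝ × ℝ)} {g : ℝ → ℝ} (hK : IsCompact K)
    (hKE : K ⊆ E) (hg : ContinuousOn g (Icc r1 r2)) :
    TendstoUniformlyOn (fun k p => g ((W.oscillate ψ k).flux b c bx f p))
      (fun p => g (W.flux b c bx f p)) atTop K := by
  refine UniformContinuousOn.comp_tendstoUniformlyOn_eventually (s := Icc r1 r2) ?_
    (fun p hp => Ioo_subset_Icc_self (hW.flux_mem_Ioo (hKE hp)))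
    (isCompact_Icc.uniformContinuousOn_of_continuous hg)
    ((tendstoUniformlyOn_flux_oscillate hcoeff hW.c21.cont hψ hcs (hsupp.trans hE)).mono
      (hKE.trans (hE.trans (omegaT_subset_clOmegaT T))))
  filter_upwards [hW.eventually_flux_oscillate_mem hcoeff hE hψ hcs hsupp hK hKE] with k hk p hp
    using Ioo_subset_Icc_self (hk p hp)

variable (hsm : ContinuousOn sm (Icc r1 r2)) (hsp : ContinuousOn sp (Icc r1 r2))
  (hψ0 : ∀ p, 0 ≤ ψ p) (hgap : ∀ p ∈ E, ψ p < phaseGap sm sp b bx c f W p)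

include hsm hsp hψ0 hgap

theorem eventually_ux_oscillate_mem : ∀ᶠ k in atTop, ∀ p ∈ tsupport ψ,
    (W.oscillate ψ k).ux p.1 p.2 ∈ Ioo (sm ((W.oscillate ψ k).flux b c bx f p))
      (sp ((W.oscillate ψ k).flux b c bx f p)) := by
  have hux := (tendstoUniformly_oscillate_ux (W := W) hψ hcs).tendstoUniformlyOn
    (s := tsupport ψ)
  have huxc := (hW.continuousOn_ux hE).mono hsupp
  have hψu : TendstoUniformlyOn (fun _ : ℝ => ψ) ψ atTop (tsupport ψ) :=
    fun u hu => .of_forall fun _ _ _ => refl_mem_uniformity hu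
  have hψc := hψ.continuous.continuousOn (s := tsupport ψ)
  have hl := eventually_forall_lt_of_tendstoUniformlyOn hcs.isCompact
    ((hW.continuousOn_comp_flux hE hcoeff hsm).mono hsupp) (huxc.sub hψc)
    (fun p hp => by
      have := (hgap p (hsupp hp)).trans_le (min_le_left _ _)
      rw [Pi.sub_apply]
      linarith)
    (hW.tendstoUniformlyOn_comp_flux_oscillate hcoeff hE hψ hcs hsupp hcs.isCompact hsupp hsm)
    (hux.sub hψu)
  have hr := eventually_forall_lt_of_tendstoUniformlyOn hcs.isCompact
    (huxc.add hψc) ((hW.continuousOn_comp_flux hE hcoeff hsp).mono hsupp)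
    (fun p hp => by
      have := (hgap p (hsupp hp)).trans_le (min_le_right _ _)
      rw [Pi.add_apply]
      linarith)
    (hux.add hψu)
    (hW.tendstoUniformlyOn_comp_flux_oscillate hcoeff hE hψ hcs hsupp hcs.isCompact hsupp hsp)
  filter_upwards [hl, hr] with k hkl hkr p hp
  have hkl := hkl p hp
  have hkr := hkr p hp
  simp only [Pi.sub_apply, Pi.add_apply] at hkl hkr
  have hsin := abs_le.mp (Real.abs_sin_le_one (k * p.1))
  constructor <;> nlinarith [hψ0 p]

theorem eventually_oscillate :
    ∀ᶠ k in atTop, IsStrictSubsolution T r1 r2 mstar sm sp b bx c f E (W.oscillate ψ k) := by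
  have hut : ∀ᶠ k in atTop, ∀ p ∈ tsupport ψ, |(W.oscillate ψ k).ut p.1 p.2| < mstar := by
    refine eventually_forall_lt_of_tendstoUniformlyOn hcs.isCompact
      (hW.c21.cont_t.mono (hsupp.trans (hE.trans (omegaT_subset_clOmegaT T)))).abs
      continuousOn_const (fun p hp => (hW.gradInU p (hsupp hp)).2.1)
      (Real.uniformContinuous_abs.comp_tendstoUniformlyOn
        (tendstoUniformly_oscillate_ut hψ hcs).tendstoUniformlyOn)
      (tendsto_const_nhds.tendstoUniformlyOn_const _)
  filter_upwards [hut, hW.eventually_flux_oscillate_mem hcoeff hE hψ hcs hsupp hcs.isCompact hsupp,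
    hW.eventually_ux_oscillate_mem hcoeff hE hψ hcs hsupp hsm hsp hψ0 hgap] with k hut hflux hux
  have hφ := contDiff_corrector (L := .fst ℝ ℝ ℝ) hψ k
  have hφψ := tsupport_corrector_subset (L := .fst ℝ ℝ ℝ) (ψ := ψ) k
  refine ⟨hW.c21.perturb hφ, hW.c31.perturb hφ, fun p hp => ?_⟩
  by_cases hpψ : p ∈ tsupport ψ
  · refine gradInU_iff.mpr ⟨?_, hut p hpψ, hflux p hpψ, hux p hpψ⟩
    simp only [PairData.oscillate, PairData.perturb, (hW.gradInU p hp).1]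
  · exact gradInU_perturb_of_notMem_tsupport hcoeff hW.c21.cont hφ (hφψ.trans (hsupp.trans hE))
      (omegaT_subset_clOmegaT T (hE hp)) (fun h => hpψ (hφψ h)) (hW.gradInU p hp)

end IsStrictSubsolution

end Oscillate

theorem tendsto_sq_sub_of_tendsto_sub {ι : Type*} {l : Filter ι} {F s : ι → ℝ} {a B : ℝ}
    (hs : ∀ i, |s i| ≤ B) (hF : Tendsto (fun i => F i - s i) l (𝓝 a)) :
    Tendsto (fun i => F i ^ 2 - (2 * a * s i + s i ^ 2)) l (𝓝 (a ^ 2)) := by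
  have hcross : Tendsto (fun i => s i * (F i - s i - a)) l (𝓝 0) :=
    bdd_le_mul_tendsto_zero' B (.of_forall hs) (by simpa using hF.sub_const a)
  have hlim := (hF.pow 2).add (hcross.const_mul 2)
  rw [mul_zero, add_zero] at hlim
  exact hlim.congr fun i => by ring

theorem tendsto_div_sub_of_tendsto_sub {ι : Type*} {l : Filter ι} {F s D : ι → ℝ} {a B D₀ : ℝ}
    (hs : ∀ i, |s i| ≤ B) (hF : Tendsto (fun i => F i - s i) l (𝓝 a)) (hD : Tendsto D l (𝓝 D₀))
    (hD₀ : D₀ ≠ 0) : Tendsto (fun i => F i / D i - s i / D₀) l (𝓝 (a / D₀)) := by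
  have hcross : Tendsto (fun i => s i * ((D i)⁻¹ - D₀⁻¹)) l (𝓝 0) :=
    bdd_le_mul_tendsto_zero' B (.of_forall hs) (by simpa using (hD.inv₀ hD₀).sub_const D₀⁻¹)
  have hlim := (hF.div hD hD₀).add hcross
  rw [add_zero] at hlim
  exact hlim.congr fun i => by rw [Pi.div_apply]; ring

theorem abs_mul_sin_le (a x : ℝ) : |a * Real.sin x| ≤ |a| := by
  rw [abs_mul]
  exact mul_le_of_le_one_right (abs_nonneg _) (Real.abs_sin_le_one x)

section OscillatingLimits

variable {V : Type*} [NormedAddCommGroup V] [NormedSpace ℝ V] [FiniteDimensional ℝ V]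
  [MeasurableSpace V] [BorelSpace V] {μ : Measure V} [μ.IsAddHaarMeasure] {S : Set V}
  {L : StrongDual ℝ V} {F : ℝ → V → ℝ} {a ψ : V → ℝ} {B : ℝ}
  (hS : MeasurableSet S) (hfin : μ S < ⊤) (hL : L ≠ 0)
  (hψ : AEStronglyMeasurable ψ (μ.restrict S)) (hψB : ∀ p ∈ S, |ψ p| ≤ B)
  (hF : ∀ᶠ k in atTop, AEStronglyMeasurable (F k) (μ.restrict S))
  (hFB : ∀ᶠ k in atTop, ∀ p ∈ S, |F k p| ≤ B)
  (hFa : ∀ p ∈ S, Tendsto (fun k => F k p - ψ p * Real.sin (k * L p)) atTop (𝓝 (a p)))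

include hS hfin hL hψ hψB hF hFB hFa

theorem tendsto_setIntegral_of_tendsto_sub_mul_sin :
    Tendsto (fun k => ∫ p in S, F k p ∂μ) atTop (𝓝 (∫ p in S, a p ∂μ)) := by
  have : IsFiniteMeasure (μ.restrict S) := isFiniteMeasure_restrict.mpr hfin.ne
  have hlim := tendsto_setIntegral_mul_sin hS hL
    (.of_bound hfin hψ B (ae_restrict_of_forall_mem hS hψB))
  rw [← add_zero (∫ p in S, a p ∂μ)]
  refine tendsto_integral_of_tendsto_sub hF
    (.of_forall fun k => hψ.mul (Continuous.aestronglyMeasurable (by fun_prop)))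
    (hFB.mono fun k => ae_restrict_of_forall_mem hS)
    (.of_forall fun k => ae_restrict_of_forall_mem hS fun p hp => ?_)
    (ae_restrict_of_forall_mem hS hFa) hlim
  exact (abs_mul_sin_le _ _).trans (hψB p hp)

theorem tendsto_setIntegral_sq_of_tendsto_sub_mul_sin
    (ha : AEStronglyMeasurable a (μ.restrict S)) (haB : ∀ p ∈ S, |a p| ≤ B) :
    Tendsto (fun k => ∫ p in S, F k p ^ 2 ∂μ) atTop
      (𝓝 ((∫ p in S, a p ^ 2 ∂μ) + (∫ p in S, ψ p ^ 2 ∂μ) / 2)) := by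
  have : IsFiniteMeasure (μ.restrict S) := isFiniteMeasure_restrict.mpr hfin.ne
  have hbound {g h : V → ℝ} (hg : ∀ p ∈ S, |g p| ≤ B) (hh : ∀ p ∈ S, |h p| ≤ B) (p) (hp : p ∈ S) :
      |g p * h p| ≤ B * B := by
    rw [abs_mul]
    exact mul_le_mul (hg p hp) (hh p hp) (abs_nonneg _) ((abs_nonneg _).trans (hg p hp))
  have hlim := tendsto_setIntegral_mul_sin_add_mul_sin_sq hS hL
    (g := fun p => 2 * (a p * ψ p)) (h := fun p => ψ p ^ 2)
    (.of_bound hfin ((ha.mul hψ).const_mul 2) (2 * (B * B))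
      (ae_restrict_of_forall_mem hS fun p hp => by simpa using hbound haB hψB p hp))
    (.of_bound hfin (hψ.pow 2) (B * B)
      (ae_restrict_of_forall_mem hS fun p hp => by simpa [sq] using hbound hψB hψB p hp))
  refine tendsto_integral_of_tendsto_sub (B := 2 * (B * B) + B * B)
    (hF.mono fun k hk => hk.pow 2) (.of_forall fun k => ?_)
    (hFB.mono fun k hk => ae_restrict_of_forall_mem hS fun p hp => ?_)
    (.of_forall fun k => ae_restrict_of_forall_mem hS fun p hp => ?_)
    (ae_restrict_of_forall_mem hS fun p hp => ?_) hlim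
  · have hk : AEStronglyMeasurable (fun p => Real.sin (k * L p)) (μ.restrict S) :=
      Continuous.aestronglyMeasurable (by fun_prop)
    exact (((ha.mul hψ).const_mul 2).mul hk).add ((hψ.pow 2).mul (hk.pow 2))
  · have := hbound hk hk p hp
    rw [sq]
    linarith [(abs_nonneg _).trans this]
  · have hψs (p) (hp : p ∈ S) : |ψ p * Real.sin (k * L p)| ≤ B :=
      (abs_mul_sin_le _ _).trans (hψB p hp)
    calc |2 * (a p * ψ p) * Real.sin (k * L p) + ψ p ^ 2 * Real.sin (k * L p) ^ 2|
        = |2 * (a p * (ψ p * Real.sin (k * L p)))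
            + ψ p * Real.sin (k * L p) * (ψ p * Real.sin (k * L p))| := by ring_nf
      _ ≤ 2 * |a p * (ψ p * Real.sin (k * L p))|
            + |ψ p * Real.sin (k * L p) * (ψ p * Real.sin (k * L p))| := by
        refine (abs_add_le _ _).trans_eq ?_
        rw [abs_mul 2, abs_two]
      _ ≤ 2 * (B * B) + B * B := by
        linarith [hbound haB hψs p hp, hbound hψs hψs p hp]
  · exact (tendsto_sq_sub_of_tendsto_sub (fun k => abs_mul_sin_le _ _) (hFa p hp)).congr
      fun k => by ring

end OscillatingLimits

theorem lt_integral_sq_of_lt_integral {X : Type*} [MeasurableSpace X] {μ : Measure X}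
    [IsFiniteMeasure μ] {g : X → ℝ} {δ : ℝ} (hδ : 0 < δ) (hg : Integrable g μ)
    (hg2 : Integrable (fun x => g x ^ 2) μ) (h : δ * μ.real univ < ∫ x, g x ∂μ) :
    δ ^ 2 * μ.real univ < ∫ x, g x ^ 2 ∂μ := by
  have hsq : ∫ x, 2 * δ * g x - δ ^ 2 ∂μ ≤ ∫ x, g x ^ 2 ∂μ :=
    integral_mono ((hg.const_mul _).sub (integrable_const _)) hg2 fun x => by
      nlinarith [sq_nonneg (g x - δ)]
  rw [integral_sub (hg.const_mul _) (integrable_const _), integral_const_mul, integral_const,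
    smul_eq_mul] at hsq
  nlinarith

section Limits

variable {T r1 r2 mstar : ℝ} {sm sp : ℝ → ℝ} {b bx c f : ℝ → ℝ → ℝ} {d : ℝ → ℝ}
  {E : Set (ℝ × ℝ)} {W : PairData} {ψ : ℝ × ℝ → ℝ}

theorem fst_ne_zero : ContinuousLinearMap.fst ℝ ℝ ℝ ≠ 0 :=
  fun h => one_ne_zero (α := ℝ) (congrArg (· ((1 : ℝ), (0 : ℝ))) h)

namespace IsStrictSubsolution

variable (hW : IsStrictSubsolution T r1 r2 mstar sm sp b bx c f E W)
  (hcoeff : ContinuousCoeff T b bx c f d) (hE : E ⊆ OmegaT T) (hEo : IsOpen E)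
  (hsm : ContinuousOn sm (Icc r1 r2)) (hsp : ContinuousOn sp (Icc r1 r2))
  (hψ : ContDiff ℝ ∞ ψ) (hcs : HasCompactSupport ψ) (hsupp : tsupport ψ ⊆ E)

include hW hcoeff hE hsm hsp hψ hcs hsupp

theorem tendsto_zfun_oscillate {p : ℝ × ℝ} (hp : p ∈ E) :
    Tendsto (fun k => Zfun sm sp b bx c f (W.oscillate ψ k).u (W.oscillate ψ k).vt
        (W.oscillate ψ k).ux p - ψ p / (sp (W.flux b c bx f p) - sm (W.flux b c bx f p))
          * Real.sin (k * p.1)) atTop (𝓝 (Zfun sm sp b bx c f W.u W.vt W.ux p)) := by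
  have hflux := (tendstoUniformlyOn_flux_oscillate (f := f) hcoeff hW.c21.cont hψ hcs
    (hsupp.trans hE)).tendsto_at (omegaT_subset_clOmegaT T (hE hp))
  have hr := Icc_mem_nhds (hW.flux_mem_Ioo hp).1 (hW.flux_mem_Ioo hp).2
  have hm := (hsm.continuousAt hr).tendsto.comp hflux
  have hlen := ((hsp.continuousAt hr).tendsto.comp hflux).sub hm
  have hux := ((tendstoUniformly_oscillate_ux (W := W) hψ hcs).tendsto_at p).sub hm
  have hlim := tendsto_div_sub_of_tendsto_sub (fun k : ℝ => abs_mul_sin_le (ψ p) (k * p.1))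
    (hux.congr fun k => sub_right_comm _ _ _) hlen
    (sub_pos.mpr (hW.sm_flux_lt_sp_flux hp)).ne'
  exact hlim.congr fun k => by rw [div_mul_eq_mul_div]; rfl

variable (hψ0 : ∀ p, 0 ≤ ψ p)
  (hgap : ∀ p ∈ E, ψ p < phaseGap sm sp b bx c f W p)

include hEo hψ0 hgap

theorem tendsto_energy_oscillate :
    Tendsto (fun k => energy E (W.oscillate ψ k)) atTop
      (𝓝 (energy E W + (∫ p in E, ψ p ^ 2) / 2)) := by
  obtain ⟨B, hBm, hBp⟩ := exists_common_bound isCompact_Icc hsm hsp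
  have hE' := hEo.measurableSet
  have hstrict := hW.eventually_oscillate hcoeff hE hψ hcs hsupp hsm hsp hψ0 hgap
  have hbound {W' : PairData} (hW' : IsStrictSubsolution T r1 r2 mstar sm sp b bx c f E W')
      (p) (hp : p ∈ E) : |W'.ux p.1 p.2| ≤ 2 * B := by
    have := hW'.abs_ux_le hBm hBp hp
    linarith [(abs_nonneg _).trans this]
  exact tendsto_setIntegral_sq_of_tendsto_sub_mul_sin (L := .fst ℝ ℝ ℝ) (B := 2 * B) hE'
    (volume_lt_top_of_subset_omegaT hE) fst_ne_zero hψ.continuous.aestronglyMeasurable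
    (fun p hp => (abs_of_nonneg (hψ0 p)).trans_le
      ((hgap p hp).le.trans (hW.phaseGap_le hBm hBp hp)))
    (hstrict.mono fun k hk => (hk.continuousOn_ux hE).aestronglyMeasurable hE')
    (hstrict.mono fun k hk => hbound hk)
    (fun p _ => (tendstoUniformly_oscillate_ux hψ hcs).tendsto_at p)
    ((hW.continuousOn_ux hE).aestronglyMeasurable hE') (hbound hW)

theorem tendsto_gauge_oscillate :
    Tendsto (fun k => Gauge sm sp b bx c f (W.oscillate ψ k).u (W.oscillate ψ k).vt
      (W.oscillate ψ k).ux E) atTop (𝓝 (Gauge sm sp b bx c f W.u W.vt W.ux E)) := by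
  have hE' := hEo.measurableSet
  have hstrict := hW.eventually_oscillate hcoeff hE hψ hcs hsupp hsm hsp hψ0 hgap
  have hlen : ContinuousOn (fun p => ψ p / (sp (W.flux b c bx f p) - sm (W.flux b c bx f p))) E :=
    hψ.continuous.continuousOn.div ((hW.continuousOn_comp_flux hE hcoeff hsp).sub
      (hW.continuousOn_comp_flux hE hcoeff hsm))
      fun p hp => (sub_pos.mpr (hW.sm_flux_lt_sp_flux hp)).ne'
  refine (tendsto_setIntegral_of_tendsto_sub_mul_sin (L := .fst ℝ ℝ ℝ) (B := 1) hE'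
    (volume_lt_top_of_subset_omegaT hE) fst_ne_zero (hlen.aestronglyMeasurable hE')
    (fun p hp => ?_)
    (hstrict.mono fun k hk => (hk.continuousOn_zfun hE hcoeff hsm hsp).aestronglyMeasurable hE')
    (hstrict.mono fun k hk p hp => hk.abs_zfun_le_one hp)
    fun p hp => hW.tendsto_zfun_oscillate hcoeff hE hsm hsp hψ hcs hsupp hp).const_mul _
  have hlen0 := sub_nonneg.mpr (hW.sm_flux_lt_sp_flux hp).le
  rw [abs_of_nonneg (div_nonneg (hψ0 p) hlen0)]
  exact div_le_one_of_le₀ ((hgap p hp).trans (hW.phaseGap_lt hp)).le hlen0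

end IsStrictSubsolution

end Limits

/-- `w` coincides with the reference pair `w* = (u*,v*)`, and `P_u` with `P_{u*}`, off the closure
of some open set `Ω^w_T` compactly contained in `E` whose boundary is null. -/
def IsLocalized (T : ℝ) (c bx us vs : ℝ → ℝ → ℝ) (E : Set (ℝ × ℝ)) (W : PairData) : Prop :=
  ∃ O : Set (ℝ × ℝ), IsOpen O ∧ closure O ⊆ E ∧ IsCompact (closure O) ∧
    volume (frontier O) = 0 ∧
    (∀ p ∈ OmegaT T \ closure O, W.u p.1 p.2 = us p.1 p.2 ∧ W.v p.1 p.2 = vs p.1 p.2) ∧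
    (∀ p ∈ OmegaT T \ closure O, Pot c bx W.u p.1 p.2 = Pot c bx us p.1 p.2)

theorem tendstoUniformly_sub_fun {ι X : Type*} {l : Filter ι} {F : ι → X → ℝ} {f : X → ℝ}
    (hF : TendstoUniformly F f l) (g : X → ℝ) :
    TendstoUniformly (fun i x => F i x - g x) (fun x => f x - g x) l := by
  simpa [Metric.tendstoUniformly_iff] using Metric.tendstoUniformly_iff.mp hF

section Admissible

variable {T r1 r2 mstar ε GammaStar : ℝ} {sigma sm sp : ℝ → ℝ} {b bx c f : ℝ → ℝ → ℝ}
  {d : ℝ → ℝ} {us ust vs : ℝ → ℝ → ℝ} {E : Set (ℝ × ℝ)} {W : PairData} {ψ : ℝ × ℝ → ℝ}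

theorem inAdmissible_iff :
    InAdmissible T r1 r2 mstar ε GammaStar sigma sm sp b bx c f us ust vs E W ↔
      IsStrictSubsolution T r1 r2 mstar sm sp b bx c f E W ∧ IsLocalized T c bx us vs E W ∧
        EssSupAbs T (fun x t => W.u x t - us x t) < ε / 2 ∧
        EssSupAbs T (fun x t => W.ut x t - ust x t) < ε / 2 ∧
        |Gauge sm sp b bx c f W.u W.vt W.ux E - GammaStar| < ε / 2 :=
  ⟨fun ⟨h21, h31, hloc, hu, hut, hgrad, hgauge⟩ => ⟨⟨h21, h31, hgrad⟩, hloc, hu, hut, hgauge⟩,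
    fun ⟨⟨h21, h31, hgrad⟩, hloc, hu, hut, hgauge⟩ => ⟨h21, h31, hloc, hu, hut, hgrad, hgauge⟩⟩

variable (hT : 0 < T) (hcoeff : ContinuousCoeff T b bx c f d) (hE : E ⊆ OmegaT T) (hEo : IsOpen E)

include hcoeff hE hEo in
theorem IsLocalized.perturb {φ : ℝ × ℝ → ℝ} (hloc : IsLocalized T c bx us vs E W)
    (hu : ContinuousOn (fun p : ℝ × ℝ => W.u p.1 p.2) (ClOmegaT T)) (hφ : ContDiff ℝ ∞ φ)
    (hcs : HasCompactSupport φ) (hsupp : tsupport φ ⊆ E) :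
    IsLocalized T c bx us vs E (W.perturb φ) := by
  obtain ⟨O, hO, hOE, hOc, hOnull, hW, hpot⟩ := hloc
  obtain ⟨O', hO', hφO', hO'E, hO'c, hO'null⟩ :=
    exists_isOpen_null_frontier volume hcs.isCompact hEo hsupp
  have hnull : volume (frontier (O ∪ O')) = 0 := measure_mono_null
    ((frontier_union_subset O O').trans (union_subset_union inter_subset_left inter_subset_right))
    (measure_union_null hOnull hO'null)
  refine ⟨O ∪ O', hO.union hO', ?_, ?_, hnull, fun p hp => ?_, fun p hp => ?_⟩ <;>
    rw [closure_union] at *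
  · exact union_subset hOE hO'E
  · exact hOc.union hO'c
  all_goals
    have hpO : p ∈ OmegaT T \ closure O := ⟨hp.1, fun h => hp.2 (.inl h)⟩
    have hpφ : p ∉ tsupport φ := fun h => hp.2 (.inr (subset_closure (hφO' h)))
  · simpa [PairData.perturb, image_eq_zero_of_notMem_tsupport hpφ,
      dirDeriv_eq_zero_of_notMem_tsupport _ hpφ] using hW p hpO
  · rw [pot_perturb hcoeff hu hφ (hsupp.trans hE) (omegaT_subset_clOmegaT T hp.1), hpot p hpO,
      image_eq_zero_of_notMem_tsupport hpφ, mul_zero, add_zero]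

variable (hus : ContinuousOn (fun p : ℝ × ℝ => us p.1 p.2) (ClOmegaT T))
  (hust : ContinuousOn (fun p : ℝ × ℝ => ust p.1 p.2) (ClOmegaT T))
  (hsm : ContinuousOn sm (Icc r1 r2)) (hsp : ContinuousOn sp (Icc r1 r2))

include hT hcoeff hE hEo hus hust hsm hsp

theorem eventually_inAdmissible_oscillate
    (hW : InAdmissible T r1 r2 mstar ε GammaStar sigma sm sp b bx c f us ust vs E W)
    (hψ : ContDiff ℝ ∞ ψ) (hcs : HasCompactSupport ψ) (hsupp : tsupport ψ ⊆ E)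
    (hψ0 : ∀ p, 0 ≤ ψ p) (hgap : ∀ p ∈ E, ψ p < phaseGap sm sp b bx c f W p) :
    ∀ᶠ k in atTop, InAdmissible T r1 r2 mstar ε GammaStar sigma sm sp b bx c f us ust vs E
      (W.oscillate ψ k) := by
  obtain ⟨hstrict, hloc, hu, hut, hgauge⟩ := inAdmissible_iff.mp hW
  have huk := eventually_essSupAbs_lt (G := fun k x t => (W.oscillate ψ k).u x t - us x t) hT
    (hstrict.c21.cont.sub hus) (tendstoUniformly_sub_fun (tendstoUniformly_oscillate_u hψ hcs)
      fun p => us p.1 p.2).tendstoUniformlyOn hu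
  have hutk := eventually_essSupAbs_lt (G := fun k x t => (W.oscillate ψ k).ut x t - ust x t) hT
    (hstrict.c21.cont_t.sub hust) (tendstoUniformly_sub_fun (tendstoUniformly_oscillate_ut hψ hcs)
      fun p => ust p.1 p.2).tendstoUniformlyOn hut
  have hgaugek := ((hstrict.tendsto_gauge_oscillate hcoeff hE hEo hsm hsp hψ hcs hsupp hψ0
    hgap).sub_const GammaStar).abs.eventually_lt_const hgauge
  filter_upwards [hstrict.eventually_oscillate hcoeff hE hψ hcs hsupp hsm hsp hψ0 hgap, huk, hutk,
    hgaugek] with k hstrictk huk hutk hgaugek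
  have hφψ := tsupport_corrector_subset (L := .fst ℝ ℝ ℝ) (ψ := ψ) k
  exact inAdmissible_iff.mpr ⟨hstrictk, hloc.perturb hcoeff hE hEo hstrict.c21.cont
    (contDiff_corrector hψ k) (hcs.isCompact.of_isClosed_subset (isClosed_tsupport _) hφψ)
    (hφψ.trans hsupp), huk, hutk, hgaugek⟩

theorem mem_closure_energy_gain {δ : ℝ} (hδ : 0 < δ)
    (hW : InAdmissible T r1 r2 mstar ε GammaStar sigma sm sp b bx c f us ust vs E W)
    (hgap : δ * volume.real E < ∫ p in E, phaseGap sm sp b bx c f W p) :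
    W ∈ closure {W' | InAdmissible T r1 r2 mstar ε GammaStar sigma sm sp b bx c f us ust vs E W' ∧
      energy E W + δ ^ 2 * volume.real E / 2 ≤ energy E W'} := by
  have hstrict := (inAdmissible_iff.mp hW).1
  have : IsFiniteMeasure (volume.restrict E) :=
    isFiniteMeasure_restrict.mpr (volume_lt_top_of_subset_omegaT hE).ne
  obtain ⟨ψ, hψ, hcs, hsupp, hψ0, hψgap, hψint⟩ := exists_contDiff_lt_setIntegral hEo
    (hstrict.continuousOn_phaseGap hE hcoeff hsm hsp)
    (hstrict.integrableOn_phaseGap hE hcoeff hsm hsp hEo) (fun p hp => hstrict.phaseGap_pos hp)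
    hgap
  have hsq : δ ^ 2 * volume.real E < ∫ p in E, ψ p ^ 2 := by
    have hψ2 : HasCompactSupport fun p => ψ p ^ 2 := hcs.comp_left (zero_pow two_ne_zero)
    rw [← measureReal_restrict_apply_univ] at hψint ⊢
    exact lt_integral_sq_of_lt_integral hδ
      (hψ.continuous.integrable_of_hasCompactSupport hcs).integrableOn
      ((hψ.continuous.pow 2).integrable_of_hasCompactSupport hψ2).integrableOn hψint
  have henergy := (hstrict.tendsto_energy_oscillate hcoeff hE hEo hsm hsp hψ hcs hsupp hψ0
    hψgap).eventually_const_lt (u := energy E W + δ ^ 2 * volume.real E / 2) (by linarith)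
  refine mem_closure_of_tendsto (tendsto_oscillate hψ hcs) ?_
  filter_upwards [henergy, eventually_inAdmissible_oscillate hT hcoeff hE hEo hus hust hsm hsp hW
    hψ hcs hsupp hψ0 hψgap] with k hk hadm using ⟨hadm, hk.le⟩

end Admissible

/-- `g` is a continuous increasing right inverse of `σ` on `I`, as are `r ↦ s_r^±`. -/
structure IsIncreasingBranch (σ g : ℝ → ℝ) (I : Set ℝ) : Prop where
  continuousOn : ContinuousOn g I
  monotoneOn : MonotoneOn g I
  rightInvOn : RightInvOn g σ I

theorem IsIncreasingBranch.of_strictMonoOn {σ g : ℝ → ℝ} {I K : Set ℝ} (hK : IsCompact K)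
    (hσ : ContinuousOn σ K) (hmono : StrictMonoOn σ K) (hg : ∀ r ∈ I, g r ∈ K ∧ σ (g r) = r) :
    IsIncreasingBranch σ g I where
  continuousOn := continuousOn_of_rightInvOn hK hσ hmono.injOn (fun r hr => (hg r hr).1)
    fun r hr => (hg r hr).2
  monotoneOn := monotoneOn_of_rightInvOn_of_mapsTo hmono.monotoneOn (fun r hr => (hg r hr).2)
    fun r hr => (hg r hr).1
  rightInvOn r hr := (hg r hr).2

theorem IsIncreasingBranch.mono {σ g : ℝ → ℝ} {I J : Set ℝ} (hg : IsIncreasingBranch σ g J)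
    (hIJ : I ⊆ J) : IsIncreasingBranch σ g I :=
  ⟨hg.continuousOn.mono hIJ, hg.monotoneOn.mono hIJ, hg.rightInvOn.mono hIJ⟩

theorem IsIncreasingBranch.mem_Icc {σ g : ℝ → ℝ} {r r1 r2 : ℝ}
    (hg : IsIncreasingBranch σ g (Icc r1 r2)) (hr : r ∈ Icc r1 r2) : g r ∈ Icc (g r1) (g r2) :=
  hg.monotoneOn.mapsTo_Icc hr

theorem dist_mk4_of_eq (a a' b c d : ℝ) : dist (mk4 a b c d) (mk4 a' b c d) = |a - a'| := by
  rw [EuclideanSpace.dist_eq, Fin.sum_univ_four]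
  simp [mk4, Real.dist_eq, Real.sqrt_sq_eq_abs]

section DeltaApprox

variable {T r1 r2 mstar δ : ℝ} {sigma sm sp : ℝ → ℝ} {b bx c f : ℝ → ℝ → ℝ} {d : ℝ → ℝ}
  {E : Set (ℝ × ℝ)} {W : PairData} {p : ℝ × ℝ}
  (hW : IsStrictSubsolution T r1 r2 mstar sm sp b bx c f E W)
  (hbm : IsIncreasingBranch sigma sm (Icc r1 r2)) (hbp : IsIncreasingBranch sigma sp (Icc r1 r2))

namespace IsStrictSubsolution

include hW in
theorem infDist_gradient_le {s : ℝ} (hp : p ∈ E)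
    (hs : (s, W.flux b c bx f p) ∈ Kprime sigma sm sp r1 r2) :
    Metric.infDist (mk4 (W.ux p.1 p.2) (W.ut p.1 p.2) (W.vx p.1 p.2) (W.vt p.1 p.2))
      (KmatSet sigma sm sp r1 r2 mstar b c bx f W.u p.1 p.2) ≤ |W.ux p.1 p.2 - s| := by
  obtain ⟨hvx, hut, -⟩ := gradInU_iff.mp (hW.gradInU p hp)
  rw [hvx, ← dist_mk4_of_eq]
  exact Metric.infDist_le_dist_of_mem ⟨s, W.ut p.1 p.2, W.vt p.1 p.2, rfl, hut.le, hs⟩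

include hW hbm hbp

theorem infDist_gradient_le_phaseGap (hp : p ∈ E) :
    Metric.infDist (mk4 (W.ux p.1 p.2) (W.ut p.1 p.2) (W.vx p.1 p.2) (W.vt p.1 p.2))
      (KmatSet sigma sm sp r1 r2 mstar b c bx f W.u p.1 p.2) ≤ phaseGap sm sp b bx c f W p := by
  have hflux := Ioo_subset_Icc_self (hW.flux_mem_Ioo hp)
  refine le_min ?_ ?_
  · rw [← abs_of_pos (sub_pos.mpr (hW.sm_flux_lt_ux hp))]
    exact hW.infDist_gradient_le hp ⟨.inl (hbm.mem_Icc hflux), (hbm.rightInvOn hflux).symm⟩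
  · rw [← abs_of_pos (sub_pos.mpr (hW.ux_lt_sp_flux hp)), abs_sub_comm]
    exact hW.infDist_gradient_le hp ⟨.inr (hbp.mem_Icc hflux), (hbp.rightInvOn hflux).symm⟩

theorem deltaApproxCond_of_phaseGap_le (hE : E ⊆ OmegaT T) (hEo : IsOpen E)
    (hcoeff : ContinuousCoeff T b bx c f d)
    (hgap : ∫ p in E, phaseGap sm sp b bx c f W p ≤ δ * volume.real E) :
    DeltaApproxCond r1 r2 mstar δ sigma sm sp b bx c f E W :=
  (setIntegral_mono_of_nonneg (fun _ _ => Metric.infDist_nonneg)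
    (fun _ => hW.infDist_gradient_le_phaseGap hbm hbp)
    (hW.integrableOn_phaseGap hE hcoeff hbm.continuousOn hbp.continuousOn hEo)).trans hgap

end IsStrictSubsolution

end DeltaApprox

theorem CoeffHyp.continuousCoeff {α T : ℝ} {b bx c f : ℝ → ℝ → ℝ} {d : ℝ → ℝ}
    (h : CoeffHyp α T b bx c f d) : ContinuousCoeff T b bx c f d where
  __ := h

section FluxHyp

variable {α s1 s2 lam Lam a r1 r2 : ℝ} {sigma sigma' g : ℝ → ℝ}
  (h : FluxHyp α s1 s2 lam Lam sigma sigma') (hr1 : sigma s2 ≤ r1) (hr2 : r2 ≤ sigma s1)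

include h

theorem FluxHyp.strictMonoOn_left : StrictMonoOn sigma (Iic s1) :=
  strictMonoOn_of_hasDerivWithinAt_pos (convex_Iic s1)
    (fun s hs => (h.deriv_left s hs).continuousWithinAt)
    (fun s hs => (h.deriv_left s (interior_subset hs)).mono interior_subset)
    fun s hs => h.deriv_pos s (.inl (by simpa using hs))

theorem FluxHyp.strictMonoOn_right : StrictMonoOn sigma (Ici s2) :=
  strictMonoOn_of_hasDerivWithinAt_pos (convex_Ici s2)
    (fun s hs => (h.deriv_right s hs).continuousWithinAt)
    (fun s hs => (h.deriv_right s (interior_subset hs)).mono interior_subset)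
    fun s hs => h.deriv_pos s (.inr (by simpa using hs))

include hr1 hr2

theorem FluxHyp.isIncreasingBranch_left
    (hg : ∀ r ∈ Icc (sigma s2) (sigma s1), g r ∈ Icc a s1 ∧ sigma (g r) = r) :
    IsIncreasingBranch sigma g (Icc r1 r2) :=
  .mono (.of_strictMonoOn isCompact_Icc
    (fun s hs => (h.deriv_left s hs.2).continuousWithinAt.mono Icc_subset_Iic_self)
    (h.strictMonoOn_left.mono Icc_subset_Iic_self) hg) (Icc_subset_Icc hr1 hr2)

theorem FluxHyp.isIncreasingBranch_right
    (hg : ∀ r ∈ Icc (sigma s2) (sigma s1), g r ∈ Icc s2 a ∧ sigma (g r) = r) :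
    IsIncreasingBranch sigma g (Icc r1 r2) :=
  .mono (.of_strictMonoOn isCompact_Icc
    (fun s hs => (h.deriv_right s hs.1).continuousWithinAt.mono Icc_subset_Ici_self)
    (h.strictMonoOn_right.mono Icc_subset_Ici_self) hg) (Icc_subset_Icc hr1 hr2)

end FluxHyp

theorem isOpen_omega2 {T a a' : ℝ} {ux : ℝ → ℝ → ℝ}
    (hux : ContinuousOn (fun p : ℝ × ℝ => ux p.1 p.2) (ClOmegaT T)) :
    IsOpen (Omega2 T a a' ux) :=
  (hux.mono (omegaT_subset_clOmegaT T)).isOpen_inter_preimage (isOpen_omegaT T) isOpen_Ioo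

theorem inAdmissible_subset_closure {T r1 r2 mstar ε GammaStar δ : ℝ} {sigma sm sp : ℝ → ℝ}
    {b bx c f : ℝ → ℝ → ℝ} {d : ℝ → ℝ} {us usx usxx ust vs : ℝ → ℝ → ℝ} {E : Set (ℝ × ℝ)}
    (hT : 0 < T) (hcoeff : ContinuousCoeff T b bx c f d)
    (hbm : IsIncreasingBranch sigma sm (Icc r1 r2)) (hbp : IsIncreasingBranch sigma sp (Icc r1 r2))
    (hstar : C21 T us usx usxx ust) (hE : E ⊆ OmegaT T) (hEo : IsOpen E) (hδ : 0 < δ) :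
    {W | InAdmissible T r1 r2 mstar ε GammaStar sigma sm sp b bx c f us ust vs E W} ⊆
      closure ({W | InAdmissible T r1 r2 mstar ε GammaStar sigma sm sp b bx c f us ust vs E W} ∩
        {W | DeltaApproxCond r1 r2 mstar δ sigma sm sp b bx c f E W}) := by
  rcases (measureReal_nonneg (μ := volume) (s := E)).eq_or_lt with hnull | hpos
  · have hE0 : volume E = 0 :=
      (measureReal_eq_zero_iff (volume_lt_top_of_subset_omegaT hE).ne).mp hnull.symm
    refine fun W hW => subset_closure ⟨hW, ?_⟩
    simp [DeltaApproxCond, setIntegral_measure_zero, hE0]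
  obtain ⟨B, hBm, hBp⟩ := exists_common_bound isCompact_Icc hbm.continuousOn hbp.continuousOn
  refine subset_closure_inter_of_gain (J := energy E) (κ := δ ^ 2 * volume.real E / 2)
    (by positivity) ⟨B ^ 2 * volume.real E, ?_⟩ fun W hW hnot => ?_
  · rintro _ ⟨W, hW, rfl⟩
    exact ((inAdmissible_iff (sigma := sigma)).mp hW).1.energy_le hE hBm hBp
  · refine mem_closure_energy_gain (sigma := sigma) hT hcoeff hE hEo hstar.cont hstar.cont_t
      hbm.continuousOn hbp.continuousOn hδ hW ?_
    by_contra! hgap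
    exact hnot (((inAdmissible_iff (sigma := sigma)).mp hW).1.deltaApproxCond_of_phaseGap_le
      hbm hbp hE hEo hcoeff hgap)

theorem density_lemma_general {T r1 r2 mstar ε GammaStar δ η : ℝ} {sigma sm sp : ℝ → ℝ}
    {b bx c f : ℝ → ℝ → ℝ} {d : ℝ → ℝ} {us usx usxx ust vs : ℝ → ℝ → ℝ} {E : Set (ℝ × ℝ)}
    {W : PairData} (hT : 0 < T) (hcoeff : ContinuousCoeff T b bx c f d)
    (hbm : IsIncreasingBranch sigma sm (Icc r1 r2)) (hbp : IsIncreasingBranch sigma sp (Icc r1 r2))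
    (hstar : C21 T us usx usxx ust) (hE : E ⊆ OmegaT T) (hEo : IsOpen E) (hδ : 0 < δ)
    (hW : InAdmissible T r1 r2 mstar ε GammaStar sigma sm sp b bx c f us ust vs E W)
    (hη : 0 < η) :
    ∃ W' : PairData,
      InAdmissible T r1 r2 mstar ε GammaStar sigma sm sp b bx c f us ust vs E W' ∧
      DeltaApproxCond r1 r2 mstar δ sigma sm sp b bx c f E W' ∧
      EssSupAbs T (fun x t =>
        Real.sqrt ((W'.u x t - W.u x t) ^ 2 + (W'.v x t - W.v x t) ^ 2)) < η := by
  obtain ⟨W', ⟨hadm, happrox⟩, hdist⟩ := ((mem_closure_iff_frequently.mp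
    (inAdmissible_subset_closure hT hcoeff hbm hbp hstar hE hEo hδ hW)).and_eventually
      (eventually_essSupAbs_dist_lt hT W hη)).exists
  exact ⟨W', hadm, happrox, hdist⟩

/-- Density Lemma. For each `δ > 0`, the set `𝒜_δ` of `δ`-approximating
subsolutions is dense in the admissible set `𝒜` for the `L∞(Ω_T;ℝ²)` norm. -/
theorem density_lemma
    (α s1 s2 lam Lam T s1star s2star r1 r2 x0 lamt Lamt mstar GammaStar ε : ℝ)
    (sigma sigma' sm sp sigmat sigmat' : ℝ → ℝ)
    (b bx c f : ℝ → ℝ → ℝ) (d : ℝ → ℝ) (u0 u0' u0'' : ℝ → ℝ)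
    (us usx usxx ust : ℝ → ℝ → ℝ)
    (hT : 0 < T)
    (hflux : FluxHyp α s1 s2 lam Lam sigma sigma')
    (hcoeff : CoeffHyp α T b bx c f d)
    (hinit : InitHyp α u0 u0' u0'')
    (hs1star : 0 ≤ s1star) (hs1star' : s1star < s1) (hs1star_eq : sigma s1star = sigma s2)
    (hs2star : s2 < s2star) (hs2star_eq : sigma s2star = sigma s1)
    (hsm : ∀ r ∈ Icc (sigma s2) (sigma s1), sm r ∈ Icc s1star s1 ∧ sigma (sm r) = r)
    (hsp : ∀ r ∈ Icc (sigma s2) (sigma s1), sp r ∈ Icc s2 s2star ∧ sigma (sp r) = r)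
    (hr1 : sigma s2 < r1) (hr12 : r1 < r2) (hr2 : r2 < sigma s1)
    (hx0 : x0 ∈ Ioo (0:ℝ) 1) (hx0l : sm r1 < u0' x0) (hx0r : u0' x0 < sp r2)
    (htilde : TildeHyp α r1 r2 lamt Lamt sigma sm sp sigmat sigmat')
    (hstar : StarSol α T sigmat sigmat' b bx c f u0 us usx usxx ust)
    (hmstar : mstar = EssSupAbs T ust + 1)
    (hGammaStar : GammaStar = Gauge sm sp b bx c f us (VStarT sigmat b bx c f us usx) usx
      (Omega2 T (sm r1) (sp r2) usx))
    (hε : 0 < ε) :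
    ∀ δ : ℝ, 0 < δ →
      ∀ W : PairData,
        InAdmissible T r1 r2 mstar ε GammaStar sigma sm sp b bx c f
          us ust (VStar sigmat b bx c f u0 us usx) (Omega2 T (sm r1) (sp r2) usx) W →
        ∀ η : ℝ, 0 < η →
          ∃ W' : PairData,
            InAdmissible T r1 r2 mstar ε GammaStar sigma sm sp b bx c f
              us ust (VStar sigmat b bx c f u0 us usx) (Omega2 T (sm r1) (sp r2) usx) W' ∧
            DeltaApproxCond r1 r2 mstar δ sigma sm sp b bx c f
              (Omega2 T (sm r1) (sp r2) usx) W' ∧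
            EssSupAbs T (fun x t =>
              Real.sqrt ((W'.u x t - W.u x t) ^ 2 + (W'.v x t - W.v x t) ^ 2)) < η := by
  exact fun δ hδ W hW η hη => density_lemma_general hT hcoeff.continuousCoeff
    (hflux.isIncreasingBranch_left hr1.le hr2.le hsm)
    (hflux.isIncreasingBranch_right hr1.le hr2.le hsp) hstar.reg (sep_subset _ _)
    (isOpen_omega2 hstar.reg.cont_x) hδ hW hη
end
end

section
/- Let Q = (x1,x2)×(t1,t2) ⊂ ℝ² be an open rectangle with x2 > x1 and t2 > t1. Given any λ1 > 0, λ2 > 0 and ε > 0, there exists a smooth function ω = (φ,ψ) : ℝ² → ℝ² with compact support contained in Q such that: (a) ‖ω‖_{L∞(Q)} < ε, ‖φ_t‖_{L∞(Q)} < ε, ‖ψ_t‖_{L∞(Q)} < ε; (b) −λ1 ≤ φ_x ≤ λ2 in Q; (c) | |{(x,t) ∈ Q : φ_x(x,t) = −λ1}| − (λ2/(λ1+λ2))|Q| | < ε and | |{(x,t) ∈ Q : φ_x(x,t) = λ2}| − (λ1/(λ1+λ2))|Q| | < ε; (d) ψ_x = φ in Q; and (e) ∫_{x1}^{x2} φ(x,t)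 dx = 0 for all t ∈ (t1,t2). -/
open MeasureTheory Set

noncomputable section

/-!
For an even bump `f` and `k > 1`, the function `f x - k f (k x)` has vanishing zeroth and first
moments, so it is the second derivative of a compactly supported `g`. It equals `1 - k` near the
centre and `1` on an outer plateau, and choosing `f` close to an indicator makes these two phases
fill the interval up to `η`. After scaling, the values are `-λ1` and `λ2`.

Putting such profiles on the `2 ^ n` subintervals of repeated bisection preserves the phase
proportions, while the mean value theorem makes the resulting `G` and `G'` uniformly small. With a
cutoff `χ` in time fixed beforehand, `φ = G' x * χ t` and `ψ = G x * χ t` form the pair. Only lower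
bounds on the two phases are estimated directly: their main terms add up to `|Q|` and the phases are
disjoint, so each lower bound yields the upper bound for the other phase.
-/

open Metric
open scoped ContDiff

section Primitive

variable {f : ℝ → ℝ}

lemma contDiff_infty_intervalIntegral (hf : ContDiff ℝ ∞ f) (a : ℝ) :
    ContDiff ℝ ∞ fun x ↦ ∫ y in a..x, f y := by
  have hderiv : deriv (fun x ↦ ∫ y in a..x, f y) = f :=
    funext fun x ↦ hf.continuous.deriv_integral f a x
  refine contDiff_infty_iff_deriv.2 ⟨fun x ↦ ?_, by rwa [hderiv]⟩
  exact (hf.continuous.integral_hasStrictDerivAt a x).hasDerivAt.differentiableAt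

lemma odd_intervalIntegral_of_even (hf : Function.Even f) :
    Function.Odd fun x ↦ ∫ y in 0..x, f y := by
  intro x
  have hreflect : ∫ y in 0..x, f y = ∫ y in -x..0, f y := by
    simpa only [hf _, neg_zero] using intervalIntegral.integral_comp_neg (a := 0) (b := x) f
  simp only [hreflect, intervalIntegral.integral_symm 0 (-x), neg_neg]

lemma even_intervalIntegral_of_odd (hcont : Continuous f) (hf : Function.Odd f) (a : ℝ) :
    Function.Even fun x ↦ ∫ y in a..x, f y := by
  intro x
  have hsymm : ∫ y in -x..x, f y = 0 := by
    have h := intervalIntegral.integral_comp_neg (a := -x) (b := x) f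
    simp only [hf _, intervalIntegral.integral_neg, neg_neg] at h
    linarith
  have hadd := intervalIntegral.integral_add_adjacent_intervals
    (hcont.intervalIntegrable (μ := volume) a (-x)) (hcont.intervalIntegrable (-x) x)
  linarith

lemma exists_deriv_deriv_eq_of_even {R : ℝ} (hf : ContDiff ℝ ∞ f) (heven : Function.Even f)
    (hzero : ∀ x, R ≤ |x| → f x = 0) :
    ∃ (Φ : ℝ → ℝ) (c : ℝ), ContDiff ℝ ∞ Φ ∧ deriv (deriv Φ) = f ∧
      ∀ x, R ≤ |x| → Φ x = c * |x| := by
  set F : ℝ → ℝ := fun x ↦ ∫ y in 0..x, f y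
  have hF : ContDiff ℝ ∞ F := contDiff_infty_intervalIntegral hf 0
  have hF_const : ∀ x, R ≤ x → F x = F R := fun x hx ↦ by
    have htail : ∫ y in R..x, f y = 0 := by
      refine intervalIntegral.integral_zero_ae (.of_forall fun y hy ↦ ?_)
      exact hzero y ((uIoc_of_le hx ▸ hy).1.le.trans (le_abs_self y))
    simp only [F, ← intervalIntegral.integral_add_adjacent_intervals
      (hf.continuous.intervalIntegrable 0 R) (hf.continuous.intervalIntegrable R x), htail,
      add_zero]
  set Φ : ℝ → ℝ := fun x ↦ F R * R + ∫ y in R..x, F y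
  have hΦ_even : Function.Even Φ := fun x ↦ congrArg (F R * R + ·)
    (even_intervalIntegral_of_odd hF.continuous (odd_intervalIntegral_of_even heven) R x)
  have hΦ_linear : ∀ x, R ≤ x → Φ x = F R * x := fun x hx ↦ by
    have hint : ∫ y in R..x, F y = ∫ _ in R..x, F R :=
      intervalIntegral.integral_congr fun y hy ↦ hF_const y (uIcc_of_le hx ▸ hy).1
    simp only [Φ, hint, intervalIntegral.integral_const, smul_eq_mul]
    ring
  refine ⟨Φ, F R, contDiff_const.add (contDiff_infty_intervalIntegral hF R), ?_, fun x hx ↦ ?_⟩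
  · have hΦ' : deriv Φ = F := funext fun x ↦ by
      rw [deriv_const_add, hF.continuous.deriv_integral]
    exact hΦ' ▸ funext fun x ↦ hf.continuous.deriv_integral f 0 x
  · rw [← hΦ_linear _ hx]
    rcases abs_choice x with h | h
    · rw [h]
    · rw [h, hΦ_even x]

-- Far out, an even second primitive of `f` is `Φ x = c |x|`, which `Φ x - k⁻¹ Φ (k x)` cancels.
lemma exists_deriv_deriv_eq_sub_dilation {R k : ℝ} (hf : ContDiff ℝ ∞ f)
    (heven : Function.Even f) (hzero : ∀ x, R ≤ |x| → f x = 0) (hk : 1 ≤ k) :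
    ∃ g : ℝ → ℝ, ContDiff ℝ ∞ g ∧ (∀ x, R ≤ |x| → g x = 0) ∧
      ∀ x, deriv (deriv g) x = f x - k * f (k * x) := by
  obtain ⟨Φ, c, hΦ, hΦ'', hΦ_linear⟩ := exists_deriv_deriv_eq_of_even hf heven hzero
  obtain ⟨hdΦ, hΦ'⟩ := contDiff_infty_iff_deriv.1 hΦ
  have hdΦ' := (contDiff_infty_iff_deriv.1 hΦ').1
  have hk0 : 0 < k := one_pos.trans_le hk
  refine ⟨fun x ↦ Φ x - k⁻¹ * Φ (k * x), by fun_prop, fun x hx ↦ ?_, fun x ↦ ?_⟩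
  · have habs : |k * x| = k * |x| := by rw [abs_mul, abs_of_pos hk0]
    have hkx : R ≤ |k * x| := habs ▸ hx.trans (le_mul_of_one_le_left (abs_nonneg x) hk)
    simp only [hΦ_linear x hx, hΦ_linear _ hkx, habs]
    field_simp
    ring
  · have hderiv : deriv (fun x ↦ Φ x - k⁻¹ * Φ (k * x)) = fun x ↦ deriv Φ x - deriv Φ (k * x) := by
      ext x
      rw [deriv_fun_sub (by fun_prop) (by fun_prop), deriv_const_mul_field, deriv_comp_mul_left,
        smul_eq_mul, inv_mul_cancel_left₀ hk0.ne']
    rw [hderiv, deriv_fun_sub (by fun_prop) (by fun_prop), deriv_comp_mul_left, hΦ'', smul_eq_mul]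

end Primitive

section Bump

lemma exists_contDiffBump_of_lt {c w : ℝ} (x₀ : ℝ) (hw : 0 < w) (hc : c < w) :
    ∃ f : ContDiffBump x₀, c < f.rIn ∧ f.rOut < w := by
  obtain ⟨r, hr, hrw⟩ := exists_between (max_lt hw hc)
  obtain ⟨R, hrR, hRw⟩ := exists_between hrw
  exact ⟨⟨r, R, (le_max_left _ _).trans_lt hr, hrR⟩, (le_max_right _ _).trans_lt hr, hRw⟩

variable (f : ContDiffBump (0 : ℝ)) {k x : ℝ}

lemma bump_sub_dilation_of_abs_le (hk : 1 ≤ k) (hx : |k * x| ≤ f.rIn) :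
    f x - k * f (k * x) = 1 - k := by
  have hx' : |x| ≤ |k * x| := by
    rw [abs_mul]
    exact le_mul_of_one_le_left (abs_nonneg x) (hk.trans (le_abs_self k))
  rw [f.one_of_mem_closedBall (mem_closedBall_zero_iff.2 hx),
    f.one_of_mem_closedBall (mem_closedBall_zero_iff.2 (hx'.trans hx)), mul_one]

lemma bump_sub_dilation_of_le_abs (hx : |x| ≤ f.rIn) (hkx : f.rOut ≤ |k * x|) :
    f x - k * f (k * x) = 1 := by
  rw [f.one_of_mem_closedBall (mem_closedBall_zero_iff.2 hx),
    f.zero_of_le_dist (by rwa [dist_zero_right]), mul_zero, sub_zero]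

lemma bump_sub_dilation_mem_Icc (hk : 1 ≤ k) (hf : f.rOut ≤ k * f.rIn) (x : ℝ) :
    f x - k * f (k * x) ∈ Icc (1 - k) 1 := by
  have hk0 : 0 < k := one_pos.trans_le hk
  rcases le_total |x| f.rIn with hx | hx
  · rw [f.one_of_mem_closedBall (mem_closedBall_zero_iff.2 hx)]
    have hle : k * f (k * x) ≤ k := mul_le_of_le_one_right hk0.le f.le_one
    have hnonneg : 0 ≤ k * f (k * x) := mul_nonneg hk0.le f.nonneg
    constructor <;> linarith
  · have hkx : f.rOut ≤ |k * x| := by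
      rw [abs_mul, abs_of_pos hk0]
      exact hf.trans (by gcongr)
    rw [f.zero_of_le_dist (x := k * x) (by rwa [dist_zero_right]), mul_zero, sub_zero]
    exact ⟨by linarith [f.nonneg' x], f.le_one⟩

lemma exists_deriv_deriv_eq_bump_sub_dilation (hk : 1 ≤ k) (m : ℝ) :
    ∃ G : ℝ → ℝ, ContDiff ℝ ∞ G ∧ tsupport G ⊆ closedBall m f.rOut ∧
      ∀ x, deriv (deriv G) x = f (x - m) - k * f (k * (x - m)) := by
  obtain ⟨g, hg, hg_zero, hg''⟩ := exists_deriv_deriv_eq_sub_dilation f.contDiff f.neg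
    (fun x hx ↦ f.zero_of_le_dist (by rwa [dist_zero_right])) hk
  refine ⟨fun x ↦ g (x - m), by fun_prop, closure_minimal (fun x hx ↦ ?_) isClosed_closedBall,
    fun x ↦ ?_⟩
  · exact (not_le.1 fun h ↦ hx (hg_zero _ h)).le
  · rw [funext fun y ↦ deriv_comp_sub_const (f := g) (a := m) (x := y), deriv_comp_sub_const, hg'']

variable {a b m : ℝ}

lemma two_mul_rIn_div_le_volume (hk : 1 ≤ k) (hball : closedBall m f.rIn ⊆ Ioo a b) :
    2 * (f.rIn / k) ≤
      volume.real {x ∈ Ioo a b | f (x - m) - k * f (k * (x - m)) = 1 - k} := by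
  have hk0 : 0 < k := one_pos.trans_le hk
  have hsub : closedBall m (f.rIn / k) ⊆
      {x ∈ Ioo a b | f (x - m) - k * f (k * (x - m)) = 1 - k} := fun x hx ↦ by
    refine ⟨hball (closedBall_subset_closedBall (div_le_self f.rIn_pos.le hk) hx),
      bump_sub_dilation_of_abs_le f hk ?_⟩
    rwa [mem_closedBall, Real.dist_eq, le_div_iff₀' hk0, ← abs_of_pos hk0, ← abs_mul] at hx
  rw [← Real.volume_real_closedBall (a := m) (div_nonneg f.rIn_pos.le hk0.le)]
  exact measureReal_mono hsub (measure_ne_top_of_subset (sep_subset _ _) measure_Ioo_lt_top.ne)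

lemma two_mul_rIn_sub_rOut_div_le_volume (hk : 0 < k) (hball : closedBall m f.rIn ⊆ Ioo a b)
    (hf : f.rOut ≤ k * f.rIn) :
    2 * (f.rIn - f.rOut / k) ≤
      volume.real {x ∈ Ioo a b | f (x - m) - k * f (k * (x - m)) = 1} := by
  have hsub : closedBall m f.rIn \ ball m (f.rOut / k) ⊆
      {x ∈ Ioo a b | f (x - m) - k * f (k * (x - m)) = 1} := fun x ⟨hx, hx'⟩ ↦ by
    refine ⟨hball hx, bump_sub_dilation_of_le_abs f hx ?_⟩
    rwa [mem_ball, Real.dist_eq, not_lt, div_le_iff₀' hk, ← abs_of_pos hk, ← abs_mul] at hx'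
  have hball_sub : ball m (f.rOut / k) ⊆ closedBall m f.rIn :=
    ball_subset_closedBall.trans (closedBall_subset_closedBall ((div_le_iff₀' hk).2 hf))
  rw [mul_sub, ← Real.volume_real_closedBall (a := m) f.rIn_pos.le,
    ← Real.volume_real_ball (a := m) (div_nonneg f.rOut_pos.le hk.le),
    ← measureReal_sdiff hball_sub measurableSet_ball measure_closedBall_lt_top.ne]
  exact measureReal_mono hsub (measure_ne_top_of_subset (sep_subset _ _) measure_Ioo_lt_top.ne)

end Bump

section CompactSupport

variable {f g : ℝ → ℝ} {a b : ℝ}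

lemma hasCompactSupport_of_tsupport_subset_Ioo (hf : tsupport f ⊆ Ioo a b) :
    HasCompactSupport f :=
  isCompact_Icc.of_isClosed_subset (isClosed_tsupport f) (hf.trans Ioo_subset_Icc_self)

lemma eq_zero_of_tsupport_subset_Ioo {x : ℝ} (hf : tsupport f ⊆ Ioo a b) (hx : x ∉ Ioo a b) :
    f x = 0 :=
  image_eq_zero_of_notMem_tsupport fun h ↦ hx (hf h)

lemma abs_le_mul_of_abs_deriv_le {C : ℝ} (hab : a ≤ b) (hf : Differentiable ℝ f)
    (hsupp : tsupport f ⊆ Ioo a b) (hC : ∀ x, |deriv f x| ≤ C) (x : ℝ) :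
    |f x| ≤ C * (b - a) := by
  have hC0 : 0 ≤ C := (abs_nonneg _).trans (hC a)
  by_cases hx : x ∈ Ioo a b
  · calc |f x| = ‖f x - f a‖ := by
          rw [eq_zero_of_tsupport_subset_Ioo hsupp left_notMem_Ioo, sub_zero, Real.norm_eq_abs]
      _ ≤ C * ‖x - a‖ := convex_univ.norm_image_sub_le_of_norm_deriv_le (fun y _ ↦ hf y)
          (fun y _ ↦ hC y) (mem_univ a) (mem_univ x)
      _ ≤ C * (b - a) := by
          rw [Real.norm_of_nonneg (sub_nonneg.2 hx.1.le)]
          gcongr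
          exact hx.2.le
  · rw [eq_zero_of_tsupport_subset_Ioo hsupp hx, abs_zero]
    exact mul_nonneg hC0 (sub_nonneg.2 hab)

lemma intervalIntegral_deriv_eq_zero (hf : ContDiff ℝ 1 f) (hsupp : tsupport f ⊆ Ioo a b) :
    ∫ x in a..b, deriv f x = 0 := by
  rw [intervalIntegral.integral_deriv_eq_sub
      (fun x _ ↦ (hf.differentiable one_ne_zero) x)
      ((hf.continuous_deriv le_rfl).intervalIntegrable a b),
    eq_zero_of_tsupport_subset_Ioo hsupp left_notMem_Ioo,
    eq_zero_of_tsupport_subset_Ioo hsupp right_notMem_Ioo, sub_zero]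

lemma abs_add_le_of_disjoint_tsupport {κ x : ℝ} (hdisj : Disjoint (tsupport f) (tsupport g))
    (hf : |f x| ≤ κ) (hg : |g x| ≤ κ) : |f x + g x| ≤ κ := by
  by_cases hx : x ∈ tsupport f
  · rwa [image_eq_zero_of_notMem_tsupport (hdisj.notMem_of_mem_left hx), add_zero]
  · rwa [image_eq_zero_of_notMem_tsupport hx, zero_add]

lemma measureReal_levelSet_add_le {m : ℝ} (ham : a ≤ m) (hmb : m ≤ b)
    (hf : tsupport f ⊆ Ioo a m) (hg : tsupport g ⊆ Ioo m b) (v : ℝ) :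
    volume.real {x ∈ Ioo a m | f x = v} + volume.real {x ∈ Ioo m b | g x = v} ≤
      volume.real {x ∈ Ioo a b | f x + g x = v} := by
  set S := {x ∈ Ioo a b | f x + g x = v}
  have hS : volume S ≠ ⊤ := measure_ne_top_of_subset (sep_subset _ _) measure_Ioo_lt_top.ne
  have hleft : {x ∈ Ioo a m | f x = v} ⊆ S ∩ Iio m := fun x ⟨hx, hxv⟩ ↦ by
    have hgx : g x = 0 := eq_zero_of_tsupport_subset_Ioo hg fun h ↦ h.1.not_gt hx.2
    exact ⟨⟨⟨hx.1, hx.2.trans_le hmb⟩, by rw [hgx, hxv, add_zero]⟩, hx.2⟩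
  have hright : {x ∈ Ioo m b | g x = v} ⊆ S \ Iio m := fun x ⟨hx, hxv⟩ ↦ by
    have hfx : f x = 0 := eq_zero_of_tsupport_subset_Ioo hf fun h ↦ h.2.not_gt hx.1
    exact ⟨⟨⟨ham.trans_lt hx.1, hx.2⟩, by rw [hfx, hxv, zero_add]⟩, hx.1.not_gt⟩
  rw [← measureReal_inter_add_sdiff (s := S) measurableSet_Iio hS]
  exact add_le_add (measureReal_mono hleft (measure_ne_top_of_subset inter_subset_left hS))
    (measureReal_mono hright (measure_ne_top_of_subset sdiff_subset hS))

end CompactSupport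

/-- A smooth function supported in `(a, b)` whose second derivative stays in `[-α, β]` and equals
`-α`, respectively `β`, on a proportion of `(a, b)` at least `β / (α + β) - η`, respectively
`α / (α + β) - η`: up to `η`, the only proportions compatible with a vanishing mean. The component
`φ` of a patching pair is built from `deriv G`, the component `ψ` from `G`. -/
structure IsTwoPhaseProfile (α β η a b : ℝ) (G : ℝ → ℝ) : Prop where
  contDiff : ContDiff ℝ ∞ G
  tsupport_subset : tsupport G ⊆ Ioo a b
  deriv_deriv_mem : ∀ x, deriv (deriv G) x ∈ Icc (-α) β
  le_volume_lower :
    (β / (α + β) - η) * (b - a) ≤ volume.real {x ∈ Ioo a b | deriv (deriv G) x = -α}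
  le_volume_upper :
    (α / (α + β) - η) * (b - a) ≤ volume.real {x ∈ Ioo a b | deriv (deriv G) x = β}

section TwoPhaseProfile

variable {α β η a b : ℝ}

lemma exists_isTwoPhaseProfile_one (hα : 0 < α) (hη : 0 < η) (hab : a < b) :
    ∃ G, IsTwoPhaseProfile α 1 η a b G := by
  obtain ⟨k, rfl⟩ : ∃ k, α = k - 1 := ⟨α + 1, by ring⟩
  have hk : 1 < k := sub_pos.1 hα
  have hk0 : 0 < k := one_pos.trans hk
  obtain ⟨m, hm⟩ : ∃ m, m = (a + b) / 2 := ⟨_, rfl⟩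
  obtain ⟨w, hw⟩ : ∃ w, w = (b - a) / 2 := ⟨_, rfl⟩
  have hw0 : 0 < w := by linarith
  obtain ⟨f, hfin, hfout⟩ := exists_contDiffBump_of_lt (c := max (w / k) ((1 - η) * w)) 0 hw0
    (max_lt (div_lt_self hw0 hk) (mul_lt_of_lt_one_left hw0 (by linarith)))
  obtain ⟨hwk, hηw⟩ := max_lt_iff.1 hfin
  have hf : f.rOut ≤ k * f.rIn := hfout.le.trans ((div_lt_iff₀' hk0).1 hwk).le
  have hball : closedBall m f.rOut ⊆ Ioo a b := by
    rw [Real.closedBall_eq_Icc]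
    exact Icc_subset_Ioo (by linarith) (by linarith)
  have hball' := (closedBall_subset_closedBall f.rIn_lt_rOut.le).trans hball
  obtain ⟨G, hG, hG_supp, hG''⟩ := exists_deriv_deriv_eq_bump_sub_dilation f hk.le m
  refine ⟨G, hG, hG_supp.trans hball, fun x ↦ ?_, ?_, ?_⟩
  · simpa only [hG'', neg_sub] using bump_sub_dilation_mem_Icc f hk.le hf (x - m)
  · simp only [hG'', neg_sub]
    refine le_trans ?_ (two_mul_rIn_div_le_volume f hk.le hball')
    have hrIn : (1 - η) * w / k ≤ f.rIn / k := by gcongr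
    have hηk : η * w / k ≤ η * w := div_le_self (by positivity) hk.le
    calc (1 / (k - 1 + 1) - η) * (b - a) = 2 * ((1 - η) * w / k + η * w / k - η * w) := by
          rw [hw]; ring
      _ ≤ 2 * (f.rIn / k) := by linarith
  · simp only [hG'']
    refine le_trans ?_ (two_mul_rIn_sub_rOut_div_le_volume f hk0 hball' hf)
    have hrOut : f.rOut / k ≤ w / k := by gcongr
    calc ((k - 1) / (k - 1 + 1) - η) * (b - a) = 2 * ((1 - η) * w - w / k) := by
          rw [hw, sub_add_cancel]; field_simp; ring
      _ ≤ 2 * (f.rIn - f.rOut / k) := by linarith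

lemma IsTwoPhaseProfile.const_mul {c : ℝ} {G : ℝ → ℝ} (hc : 0 < c)
    (hG : IsTwoPhaseProfile α β η a b G) :
    IsTwoPhaseProfile (c * α) (c * β) η a b (fun x ↦ c * G x) := by
  have hderiv : deriv (deriv fun x ↦ c * G x) = fun x ↦ c * deriv (deriv G) x := by
    simp only [deriv_const_mul_field']
  refine ⟨contDiff_const.mul hG.contDiff, tsupport_mul_subset_right.trans hG.tsupport_subset,
    fun x ↦ ?_, ?_, ?_⟩
  · obtain ⟨hlower, hupper⟩ := hG.deriv_deriv_mem x
    simp only [hderiv, ← mul_neg]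
    exact ⟨by gcongr, by gcongr⟩
  · simpa only [hderiv, ← mul_neg, ← mul_add, mul_div_mul_left _ _ hc.ne',
      mul_right_inj' hc.ne'] using hG.le_volume_lower
  · simpa only [hderiv, ← mul_add, mul_div_mul_left _ _ hc.ne', mul_right_inj' hc.ne']
      using hG.le_volume_upper

lemma exists_isTwoPhaseProfile (hα : 0 < α) (hβ : 0 < β) (hη : 0 < η) (hab : a < b) :
    ∃ G, IsTwoPhaseProfile α β η a b G := by
  obtain ⟨G, hG⟩ := exists_isTwoPhaseProfile_one (div_pos hα hβ) hη hab
  have h := hG.const_mul hβ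
  rw [mul_div_cancel₀ _ hβ.ne', mul_one] at h
  exact ⟨_, h⟩

lemma IsTwoPhaseProfile.abs_deriv_le_and_abs_le {G : ℝ → ℝ} (hα : 0 ≤ α) (hβ : 0 ≤ β)
    (hab : a ≤ b) (hG : IsTwoPhaseProfile α β η a b G) (x : ℝ) :
    |deriv G x| ≤ (α + β) * (b - a) ∧ |G x| ≤ (α + β) * (b - a) * (b - a) := by
  obtain ⟨hdG, hG'⟩ := contDiff_infty_iff_deriv.1 hG.contDiff
  have hdG' := (contDiff_infty_iff_deriv.1 hG').1
  have hG'' : ∀ y, |deriv (deriv G) y| ≤ α + β := fun y ↦ by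
    obtain ⟨hlower, hupper⟩ := hG.deriv_deriv_mem y
    exact abs_le.2 ⟨by linarith, by linarith⟩
  have hderiv := abs_le_mul_of_abs_deriv_le hab hdG'
    (tsupport_deriv_subset.trans hG.tsupport_subset) hG''
  exact ⟨hderiv x, abs_le_mul_of_abs_deriv_le hab hdG hG.tsupport_subset hderiv x⟩

lemma IsTwoPhaseProfile.add {m : ℝ} {F G : ℝ → ℝ} (ham : a ≤ m) (hmb : m ≤ b)
    (hF : IsTwoPhaseProfile α β η a m F) (hG : IsTwoPhaseProfile α β η m b G) :
    IsTwoPhaseProfile α β η a b (fun x ↦ F x + G x) := by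
  obtain ⟨hdF, hF'⟩ := contDiff_infty_iff_deriv.1 hF.contDiff
  obtain ⟨hdG, hG'⟩ := contDiff_infty_iff_deriv.1 hG.contDiff
  have hdF' := (contDiff_infty_iff_deriv.1 hF').1
  have hdG' := (contDiff_infty_iff_deriv.1 hG').1
  have hderiv : deriv (deriv fun x ↦ F x + G x) =
      fun x ↦ deriv (deriv F) x + deriv (deriv G) x := by
    have h : deriv (fun x ↦ F x + G x) = fun x ↦ deriv F x + deriv G x :=
      funext fun x ↦ deriv_fun_add (hdF x) (hdG x)
    exact h ▸ funext fun x ↦ deriv_fun_add (hdF' x) (hdG' x)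
  have hF_supp : tsupport (deriv (deriv F)) ⊆ Ioo a m :=
    (tsupport_deriv_subset.trans tsupport_deriv_subset).trans hF.tsupport_subset
  have hG_supp : tsupport (deriv (deriv G)) ⊆ Ioo m b :=
    (tsupport_deriv_subset.trans tsupport_deriv_subset).trans hG.tsupport_subset
  have hlevel := measureReal_levelSet_add_le ham hmb hF_supp hG_supp
  refine ⟨hF.contDiff.add hG.contDiff, (tsupport_add F G).trans (union_subset
    (hF.tsupport_subset.trans (Ioo_subset_Ioo_right hmb))
    (hG.tsupport_subset.trans (Ioo_subset_Ioo_left ham))), fun x ↦ ?_, ?_, ?_⟩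
  · rw [hderiv]
    by_cases hx : x ∈ Ioo a m
    · have hGx := eq_zero_of_tsupport_subset_Ioo hG_supp fun h ↦ h.1.not_gt hx.2
      simpa only [hGx, add_zero] using hF.deriv_deriv_mem x
    · have hFx := eq_zero_of_tsupport_subset_Ioo hF_supp hx
      simpa only [hFx, zero_add] using hG.deriv_deriv_mem x
  · rw [hderiv]
    linarith [hlevel (-α), hF.le_volume_lower, hG.le_volume_lower]
  · rw [hderiv]
    linarith [hlevel β, hF.le_volume_upper, hG.le_volume_upper]

lemma exists_isTwoPhaseProfile_of_le_two_pow (hα : 0 < α) (hβ : 0 < β) (hη : 0 < η) {d : ℝ}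
    (n : ℕ) (hab : a < b) (hd : b - a ≤ 2 ^ n * d) :
    ∃ G, IsTwoPhaseProfile α β η a b G ∧
      ∀ x, |deriv G x| ≤ (α + β) * d ∧ |G x| ≤ (α + β) * d * d := by
  induction n generalizing a b with
  | zero =>
    rw [pow_zero, one_mul] at hd
    have hab' : 0 ≤ b - a := sub_nonneg.2 hab.le
    have hd0 : 0 ≤ d := hab'.trans hd
    obtain ⟨G, hG⟩ := exists_isTwoPhaseProfile hα hβ hη hab
    refine ⟨G, hG, fun x ↦ ?_⟩
    obtain ⟨hG', hG0⟩ := hG.abs_deriv_le_and_abs_le hα.le hβ.le hab.le x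
    exact ⟨hG'.trans (by gcongr), hG0.trans (by gcongr)⟩
  | succ n ih =>
    rw [pow_succ] at hd
    have ham : a < (a + b) / 2 := by linarith
    have hmb : (a + b) / 2 < b := by linarith
    obtain ⟨F, hF, hF_le⟩ := ih ham (by linarith)
    obtain ⟨G, hG, hG_le⟩ := ih hmb (by linarith)
    have hdisj : Disjoint (tsupport F) (tsupport G) := disjoint_left.2 fun x hxF hxG ↦
      (hF.tsupport_subset hxF).2.not_gt (hG.tsupport_subset hxG).1
    refine ⟨_, hF.add ham.le hmb.le hG, fun x ↦ ⟨?_, ?_⟩⟩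
    · rw [deriv_fun_add (hF.contDiff.differentiable (by simp) x)
        (hG.contDiff.differentiable (by simp) x)]
      exact abs_add_le_of_disjoint_tsupport
        (hdisj.mono tsupport_deriv_subset tsupport_deriv_subset) (hF_le x).1 (hG_le x).1
    · exact abs_add_le_of_disjoint_tsupport hdisj (hF_le x).2 (hG_le x).2

lemma exists_isTwoPhaseProfile_abs_le (hα : 0 < α) (hβ : 0 < β) (hη : 0 < η) (hab : a < b)
    {κ : ℝ} (hκ : 0 < κ) :
    ∃ G, IsTwoPhaseProfile α β η a b G ∧ (∀ x, |G x| ≤ κ) ∧ ∀ x, |deriv G x| ≤ κ := by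
  obtain ⟨d, hd0, hd⟩ : ∃ d, 0 < d ∧ d < min 1 (κ / (α + β)) :=
    exists_between (lt_min one_pos (by positivity))
  obtain ⟨hd1, hdκ⟩ := lt_min_iff.1 hd
  rw [lt_div_iff₀' (by positivity)] at hdκ
  obtain ⟨n, hn⟩ := pow_unbounded_of_one_lt ((b - a) / d) (one_lt_two (α := ℝ))
  obtain ⟨G, hG, hG_le⟩ := exists_isTwoPhaseProfile_of_le_two_pow hα hβ hη n hab
    ((div_lt_iff₀ hd0).1 hn).le
  refine ⟨G, hG, fun x ↦ ?_, fun x ↦ (hG_le x).1.trans hdκ.le⟩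
  calc |G x| ≤ (α + β) * d * d := (hG_le x).2
    _ ≤ (α + β) * d := mul_le_of_le_one_right (by positivity) hd1.le
    _ ≤ κ := hdκ.le

end TwoPhaseProfile

lemma tsupport_mul_prod {X Y M : Type*} [TopologicalSpace X] [TopologicalSpace Y]
    [MulZeroClass M] [NoZeroDivisors M] (f : X → M) (g : Y → M) :
    tsupport (fun p : X × Y ↦ f p.1 * g p.2) = tsupport f ×ˢ tsupport g := by
  have hsupp : Function.support (fun p : X × Y ↦ f p.1 * g p.2) =
      Function.support f ×ˢ Function.support g := by
    ext p
    exact mul_ne_zero_iff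
  rw [tsupport, hsupp, closure_prod_eq, tsupport, tsupport]

/-- A smooth cutoff in the time variable: supported in `(c, d)`, with values in `[0, 1]`, and equal
to `1` on a proportion of `(c, d)` at least `1 - η`. -/
structure IsCutoff (η c d : ℝ) (χ : ℝ → ℝ) : Prop where
  contDiff : ContDiff ℝ ∞ χ
  tsupport_subset : tsupport χ ⊆ Ioo c d
  mem_Icc : ∀ t, χ t ∈ Icc 0 1
  le_volume : (1 - η) * (d - c) ≤ volume.real {t ∈ Ioo c d | χ t = 1}

lemma exists_isCutoff {η c d : ℝ} (hη : 0 < η) (hcd : c < d) : ∃ χ, IsCutoff η c d χ := by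
  obtain ⟨m, hm⟩ : ∃ m, m = (c + d) / 2 := ⟨_, rfl⟩
  obtain ⟨w, hw⟩ : ∃ w, w = (d - c) / 2 := ⟨_, rfl⟩
  have hw0 : 0 < w := by linarith
  obtain ⟨χ, hin, hout⟩ := exists_contDiffBump_of_lt (c := (1 - η) * w) m hw0
    (mul_lt_of_lt_one_left hw0 (by linarith))
  have hball : closedBall m χ.rOut ⊆ Ioo c d := by
    rw [Real.closedBall_eq_Icc]
    exact Icc_subset_Ioo (by linarith) (by linarith)
  have hplateau : closedBall m χ.rIn ⊆ {t ∈ Ioo c d | χ t = 1} := fun t ht ↦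
    ⟨hball (closedBall_subset_closedBall χ.rIn_lt_rOut.le ht), χ.one_of_mem_closedBall ht⟩
  refine ⟨χ, χ.contDiff, χ.tsupport_eq ▸ hball, fun _ ↦ ⟨χ.nonneg, χ.le_one⟩, ?_⟩
  calc (1 - η) * (d - c) ≤ 2 * χ.rIn := by rw [hw] at hin; linarith
    _ = volume.real (closedBall m χ.rIn) := (Real.volume_real_closedBall χ.rIn_pos.le).symm
    _ ≤ volume.real {t ∈ Ioo c d | χ t = 1} :=
        measureReal_mono hplateau (measure_ne_top_of_subset (sep_subset _ _) measure_Ioo_lt_top.ne)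

section Cutoff

variable {η a b c d : ℝ} {f χ : ℝ → ℝ}

lemma IsCutoff.exists_abs_deriv_le (hχ : IsCutoff η c d χ) : ∃ K, 0 ≤ K ∧ ∀ t, |deriv χ t| ≤ K := by
  obtain ⟨K, hK⟩ :=
    (hasCompactSupport_of_tsupport_subset_Ioo hχ.tsupport_subset).deriv.exists_bound_of_continuous
      (hχ.contDiff.continuous_deriv (by simp))
  exact ⟨K, (abs_nonneg _).trans (hK 0), hK⟩

lemma IsCutoff.abs_mul_le {x κ : ℝ} (hχ : IsCutoff η c d χ) (hx : |x| ≤ κ) (t : ℝ) :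
    |x * χ t| ≤ κ := by
  obtain ⟨hχ0, hχ1⟩ := hχ.mem_Icc t
  rw [abs_mul, abs_of_nonneg hχ0]
  exact (mul_le_of_le_one_right (abs_nonneg x) hχ1).trans hx

lemma IsCutoff.mul_mem_Icc {α β x : ℝ} (hχ : IsCutoff η c d χ) (hα : 0 ≤ α) (hβ : 0 ≤ β)
    (hx : x ∈ Icc (-α) β) (t : ℝ) : x * χ t ∈ Icc (-α) β := by
  have hzero : (0 : ℝ) ∈ Icc (-α) β := ⟨neg_nonpos.2 hα, hβ⟩
  simpa only [smul_eq_mul, mul_comm] using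
    (convex_Icc (-α) β).smul_mem_of_zero_mem hzero hx (hχ.mem_Icc t)

lemma IsCutoff.contDiff_mul (hχ : IsCutoff η c d χ) (hf : ContDiff ℝ ∞ f) :
    ContDiff ℝ ∞ fun p : ℝ × ℝ ↦ f p.1 * χ p.2 :=
  hf.fst'.mul hχ.contDiff.snd'

lemma IsCutoff.tsupport_mul_subset (hχ : IsCutoff η c d χ) (hf : tsupport f ⊆ Ioo a b) :
    tsupport (fun p : ℝ × ℝ ↦ f p.1 * χ p.2) ⊆ Ioo a b ×ˢ Ioo c d :=
  (tsupport_mul_prod f χ).trans_subset (prod_mono hf hχ.tsupport_subset)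

lemma IsCutoff.hasCompactSupport_mul (hχ : IsCutoff η c d χ) (hf : tsupport f ⊆ Ioo a b) :
    HasCompactSupport fun p : ℝ × ℝ ↦ f p.1 * χ p.2 := by
  rw [HasCompactSupport, tsupport_mul_prod]
  exact (hasCompactSupport_of_tsupport_subset_Ioo hf).isCompact.prod
    (hasCompactSupport_of_tsupport_subset_Ioo hχ.tsupport_subset).isCompact

end Cutoff

lemma sqrt_sq_add_sq_le_two_mul {x y κ : ℝ} (hx : |x| ≤ κ) (hy : |y| ≤ κ) :
    √(x ^ 2 + y ^ 2) ≤ 2 * κ := by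
  have hκ : 0 ≤ κ := (abs_nonneg x).trans hx
  refine Real.sqrt_le_iff.2 ⟨by positivity, ?_⟩
  nlinarith [sq_le_sq' (abs_le.1 hx).1 (abs_le.1 hx).2, sq_le_sq' (abs_le.1 hy).1 (abs_le.1 hy).2]

lemma sSup_image_lt_of_le {X : Type*} {s : Set X} {f : X → ℝ} {c ε : ℝ}
    (hf : ∀ x ∈ s, f x ≤ c) (hc : 0 ≤ c) (hcε : c < ε) : sSup (f '' s) < ε :=
  (Real.sSup_le (forall_mem_image.2 hf) hc).trans_lt hcε

section Measure

variable {X Y : Type*} [MeasurableSpace X] [MeasurableSpace Y] {μ : Measure X} {ν : Measure Y}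

lemma mul_measureReal_levelSet_le [SFinite ν] {s : Set X} {t : Set Y} (hs : μ s ≠ ⊤) (ht : ν t ≠ ⊤)
    (f : X → ℝ) (g : Y → ℝ) (v : ℝ) :
    μ.real {x ∈ s | f x = v} * ν.real {y ∈ t | g y = 1} ≤
      (μ.prod ν).real {p ∈ s ×ˢ t | f p.1 * g p.2 = v} := by
  rw [← measureReal_prod_prod]
  refine measureReal_mono ?_ (measure_ne_top_of_subset (sep_subset _ _) ?_)
  · rintro p ⟨⟨hp₁, hv⟩, hp₂, hone⟩
    exact ⟨⟨hp₁, hp₂⟩, by rw [hv, hone, mul_one]⟩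
  · rw [Measure.prod_prod]
    exact ENNReal.mul_ne_top hs ht

lemma abs_measureReal_sub_le_of_disjoint {s t u : Set X} {p q e : ℝ} (hu : μ u ≠ ⊤) (hsu : s ⊆ u)
    (htu : t ⊆ u) (ht : MeasurableSet t) (hst : Disjoint s t) (hpq : μ.real u = p + q)
    (hs_le : p - e ≤ μ.real s) (ht_le : q - e ≤ μ.real t) :
    |μ.real s - p| ≤ e ∧ |μ.real t - q| ≤ e := by
  have hadd : μ.real s + μ.real t ≤ p + q := by
    rw [← hpq, ← measureReal_union hst ht (measure_ne_top_of_subset hsu hu)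
      (measure_ne_top_of_subset htu hu)]
    exact measureReal_mono (union_subset hsu htu) hu
  constructor <;> rw [abs_le] <;> constructor <;> linarith

end Measure

section SeparatedPair

variable {α β η a b c d : ℝ} {G χ : ℝ → ℝ}

lemma IsCutoff.le_volume_phase {f : ℝ → ℝ} {θ v : ℝ} (hη : 0 ≤ η) (hab : a ≤ b) (hcd : c ≤ d)
    (hχ : IsCutoff η c d χ) (hf : (θ - η) * (b - a) ≤ volume.real {x ∈ Ioo a b | f x = v}) :
    θ * ((b - a) * (d - c)) - 2 * ((b - a) * (d - c)) * η ≤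
      volume.real {p ∈ Ioo a b ×ˢ Ioo c d | f p.1 * χ p.2 = v} := by
  have hprod := mul_measureReal_levelSet_le (μ := volume) (ν := volume)
    (measure_Ioo_lt_top (a := a) (b := b)).ne (measure_Ioo_lt_top (a := c) (b := d)).ne f χ v
  rw [← Measure.volume_eq_prod] at hprod
  have hle : volume.real {x ∈ Ioo a b | f x = v} ≤ b - a := by
    rw [← Real.volume_real_Ioo_of_le hab]
    exact measureReal_mono (sep_subset _ _) measure_Ioo_lt_top.ne
  set M := volume.real {x ∈ Ioo a b | f x = v}
  calc θ * ((b - a) * (d - c)) - 2 * ((b - a) * (d - c)) * η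
      = (θ - η) * (b - a) * (d - c) - (b - a) * (η * (d - c)) := by ring
    _ ≤ M * (d - c) - M * (η * (d - c)) := by gcongr
    _ = M * ((1 - η) * (d - c)) := by ring
    _ ≤ M * volume.real {t ∈ Ioo c d | χ t = 1} := by gcongr; exact hχ.le_volume
    _ ≤ _ := hprod

lemma IsTwoPhaseProfile.abs_volume_phase_sub_le (hα : 0 < α) (hβ : 0 < β) (hη : 0 ≤ η)
    (hab : a ≤ b) (hcd : c ≤ d) (hG : IsTwoPhaseProfile α β η a b G) (hχ : IsCutoff η c d χ) :
    |volume.real {p ∈ Ioo a b ×ˢ Ioo c d | deriv (deriv G) p.1 * χ p.2 = -α} -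
        β / (α + β) * ((b - a) * (d - c))| ≤ 2 * ((b - a) * (d - c)) * η ∧
    |volume.real {p ∈ Ioo a b ×ˢ Ioo c d | deriv (deriv G) p.1 * χ p.2 = β} -
        α / (α + β) * ((b - a) * (d - c))| ≤ 2 * ((b - a) * (d - c)) * η := by
  have hfinite : volume (Ioo a b ×ˢ Ioo c d) ≠ ⊤ := by
    rw [Measure.volume_eq_prod, Measure.prod_prod]
    exact ENNReal.mul_ne_top measure_Ioo_lt_top.ne measure_Ioo_lt_top.ne
  have hmeas : Measurable fun p : ℝ × ℝ ↦ deriv (deriv G) p.1 * χ p.2 :=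
    ((measurable_deriv _).comp measurable_fst).mul
      (hχ.contDiff.continuous.measurable.comp measurable_snd)
  refine abs_measureReal_sub_le_of_disjoint hfinite (sep_subset _ _) (sep_subset _ _)
    ((measurableSet_Ioo.prod measurableSet_Ioo).inter (hmeas (measurableSet_singleton β))) ?_ ?_
    (hχ.le_volume_phase hη hab hcd hG.le_volume_lower)
    (hχ.le_volume_phase hη hab hcd hG.le_volume_upper)
  · exact disjoint_left.2 fun p hp hp' ↦ by linarith [hp.2.symm.trans hp'.2]
  · rw [Measure.volume_eq_prod, measureReal_prod_prod, Real.volume_real_Ioo_of_le hab,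
      Real.volume_real_Ioo_of_le hcd]
    field_simp
    ring

end SeparatedPair

/-- technical lemma for local patching. On an open rectangle
`Q = (x1,x2) × (t1,t2)`, given `λ1, λ2, ε > 0` there is a smooth, compactly supported pair
`ω = (φ,ψ)` with small sup-norms, `φ_x ∈ [-λ1, λ2]`, prescribed (up to `ε`) measures for the
two slope phases, `ψ_x = φ`, and zero spatial means. -/
theorem exists_patching_pair
    (x1 x2 t1 t2 lam1 lam2 ε : ℝ) (hx : x1 < x2) (ht : t1 < t2)
    (h1 : 0 < lam1) (h2 : 0 < lam2) (hε : 0 < ε) :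
    ∃ φ ψ : ℝ → ℝ → ℝ,
      ContDiff ℝ (⊤ : ℕ∞) (fun p : ℝ × ℝ => φ p.1 p.2) ∧
      ContDiff ℝ (⊤ : ℕ∞) (fun p : ℝ × ℝ => ψ p.1 p.2) ∧
      HasCompactSupport (fun p : ℝ × ℝ => φ p.1 p.2) ∧
      HasCompactSupport (fun p : ℝ × ℝ => ψ p.1 p.2) ∧
      tsupport (fun p : ℝ × ℝ => φ p.1 p.2) ⊆ Ioo x1 x2 ×ˢ Ioo t1 t2 ∧
      tsupport (fun p : ℝ × ℝ => ψ p.1 p.2) ⊆ Ioo x1 x2 ×ˢ Ioo t1 t2 ∧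
      -- (a)
      sSup ((fun p : ℝ × ℝ => Real.sqrt ((φ p.1 p.2) ^ 2 + (ψ p.1 p.2) ^ 2))
        '' (Ioo x1 x2 ×ˢ Ioo t1 t2)) < ε ∧
      sSup ((fun p : ℝ × ℝ => |deriv (fun τ => φ p.1 τ) p.2|)
        '' (Ioo x1 x2 ×ˢ Ioo t1 t2)) < ε ∧
      sSup ((fun p : ℝ × ℝ => |deriv (fun τ => ψ p.1 τ) p.2|)
        '' (Ioo x1 x2 ×ˢ Ioo t1 t2)) < ε ∧
      -- (b)
      (∀ p ∈ Ioo x1 x2 ×ˢ Ioo t1 t2,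
        -lam1 ≤ deriv (fun y => φ y p.2) p.1 ∧ deriv (fun y => φ y p.2) p.1 ≤ lam2) ∧
      -- (c)
      |(volume {p ∈ Ioo x1 x2 ×ˢ Ioo t1 t2 | deriv (fun y => φ y p.2) p.1 = -lam1}).toReal
        - lam2 / (lam1 + lam2) * ((x2 - x1) * (t2 - t1))| < ε ∧
      |(volume {p ∈ Ioo x1 x2 ×ˢ Ioo t1 t2 | deriv (fun y => φ y p.2) p.1 = lam2}).toReal
        - lam1 / (lam1 + lam2) * ((x2 - x1) * (t2 - t1))| < ε ∧
      -- (d)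
      (∀ p ∈ Ioo x1 x2 ×ˢ Ioo t1 t2, deriv (fun y => ψ y p.2) p.1 = φ p.1 p.2) ∧
      -- (e)
      (∀ t ∈ Ioo t1 t2, (∫ x in x1..x2, φ x t) = 0) := by
  obtain ⟨η, hη, hηε⟩ := exists_pos_mul_lt hε (2 * ((x2 - x1) * (t2 - t1)))
  obtain ⟨χ, hχ⟩ := exists_isCutoff hη ht
  obtain ⟨K, hK0, hK⟩ := hχ.exists_abs_deriv_le
  obtain ⟨κ, hκ, hκε⟩ := exists_pos_mul_lt hε (2 + K)
  have hKκ : 0 ≤ K * κ := mul_nonneg hK0 hκ.le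
  obtain ⟨G, hG, hG_le, hG'_le⟩ := exists_isTwoPhaseProfile_abs_le h1 h2 hη hx hκ
  have hG' := (contDiff_infty_iff_deriv.1 hG.contDiff).2
  have hG'_supp := tsupport_deriv_subset.trans hG.tsupport_subset
  obtain ⟨hlower, hupper⟩ := hG.abs_volume_phase_sub_le h1 h2 hη.le hx.le ht.le hχ
  refine ⟨fun x t ↦ deriv G x * χ t, fun x t ↦ G x * χ t, hχ.contDiff_mul hG',
    hχ.contDiff_mul hG.contDiff, hχ.hasCompactSupport_mul hG'_supp,
    hχ.hasCompactSupport_mul hG.tsupport_subset, hχ.tsupport_mul_subset hG'_supp,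
    hχ.tsupport_mul_subset hG.tsupport_subset, ?_, ?_, ?_, ?_, ?_, ?_,
    fun _ _ ↦ deriv_mul_const_field _, ?_⟩ <;>
    simp only [deriv_mul_const_field, deriv_const_mul_field, intervalIntegral.integral_mul_const]
  · exact sSup_image_lt_of_le (fun p _ ↦ sqrt_sq_add_sq_le_two_mul (hχ.abs_mul_le (hG'_le p.1) p.2)
      (hχ.abs_mul_le (hG_le p.1) p.2)) (by positivity) (by linarith)
  · exact sSup_image_lt_of_le (fun p _ ↦ (abs_mul _ _).trans_le (mul_le_mul (hG'_le p.1) (hK p.2)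
      (abs_nonneg _) hκ.le)) (by positivity) (by linarith)
  · exact sSup_image_lt_of_le (fun p _ ↦ (abs_mul _ _).trans_le (mul_le_mul (hG_le p.1) (hK p.2)
      (abs_nonneg _) hκ.le)) (by positivity) (by linarith)
  · exact fun p _ ↦ hχ.mul_mem_Icc h1.le h2.le (hG.deriv_deriv_mem p.1) p.2
  · exact hlower.trans_lt hηε
  · exact hupper.trans_lt hηε
  · intro t _
    rw [intervalIntegral_deriv_eq_zero (hG.contDiff.of_le (by simp)) hG.tsupport_subset, zero_mul]
end
end
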